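/- Let U_q(𝔭_J) be the parabolic quantum group associated to a subset J ⊆ I. Then the multiplication map induces an isomorphism of vector spaces U_q^-(𝔭_J) ⊗ U_q^0(𝔭_J) ⊗ U_q^+(𝔭_J) ≅ U_q(𝔭_J), where U_q^+(𝔭_J), U_q^0(𝔭_J), U_q^-(𝔭_J) are the subalgebras generated by {e_j : j ∈ J}, {q^h : h ∈ P^∨}, {f_i : i ∈ I} respectively, and the canonical homomorphism U_q(𝔭_J) → U_q(𝔤) is injective. -/

import Mathlib

noncomputable section

open scoped TensorProduct

/-- The field `ℚ(q)` of rational functions. -/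
abbrev KK : Type := RatFunc ℚ

/-- The indeterminate `q ∈ ℚ(q)`. -/
def qq : KK := RatFunc.X

/-- `q^m` for `m ∈ ℤ`. -/
def qpow (m : ℤ) : KK := qq ^ m

/-- The quantum integer `[n]_i = (q_i^n - q_i^{-n})/(q_i - q_i^{-1})` where `q_i = q^d`. -/
def qint (d n : ℤ) : KK := (qpow (d * n) - qpow (-(d * n))) / (qpow d - qpow (-d))

/-- The quantum factorial `[n]_i!`. -/
def qfact (d : ℤ) : ℕ → KK
  | 0 => 1
  | n + 1 => qfact d n * qint d (n + 1)

/-- A symmetrizable generalized Cartan matrix `a` with symmetrizers `d i`, so that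
`(α_i, α_j) = d i * a i j`. -/
structure CartanData (I : Type) : Type where
  a : I → I → ℤ
  d : I → ℤ
  d_pos : ∀ i, 0 < d i
  a_diag : ∀ i, a i i = 2
  a_offdiag : ∀ i j, i ≠ j → a i j ≤ 0
  symm : ∀ i j, d i * a i j = d j * a j i

/-- Generators of the quantum group `U_q(𝔤)` (adjoint form: `t i = q^{(α_i,α_i)/2 · h_i}`). -/
inductive QGen (I : Type) : Type
  | e : I → QGen I
  | f : I → QGen I
  | t : I → QGen I
  | tinv : I → QGen I

variable {I : Type}

/-- The free algebra on the generators of `U_q(𝔤)`. -/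
abbrev FA (I : Type) : Type := FreeAlgebra KK (QGen I)

def ge (i : I) : FA I := FreeAlgebra.ι KK (QGen.e i)
def gf (i : I) : FA I := FreeAlgebra.ι KK (QGen.f i)
def gT (i : I) : FA I := FreeAlgebra.ι KK (QGen.t i)
def gTinv (i : I) : FA I := FreeAlgebra.ι KK (QGen.tinv i)

/-- Divided power `e_i^{(s)}` in the free algebra. -/
def edp (C : CartanData I) (i : I) (s : ℕ) : FA I := (qfact (C.d i) s)⁻¹ • ge i ^ s

/-- Divided power `f_i^{(s)}` in the free algebra. -/
def fdp (C : CartanData I) (i : I) (s : ℕ) : FA I := (qfact (C.d i) s)⁻¹ • gf i ^ s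

/-- The quantum Serre element `Σ_{s} (-1)^s e_i^{(s)} e_j e_i^{(1-a_{ij}-s)}`. -/
def serreE (C : CartanData I) (i j : I) : FA I :=
  ∑ s ∈ Finset.range ((1 - C.a i j).toNat + 1),
    ((-1 : KK) ^ s) • (edp C i s * ge j * edp C i ((1 - C.a i j).toNat - s))

/-- The quantum Serre element `Σ_{s} (-1)^s f_i^{(s)} f_j f_i^{(1-a_{ij}-s)}`. -/
def serreF (C : CartanData I) (i j : I) : FA I :=
  ∑ s ∈ Finset.range ((1 - C.a i j).toNat + 1),
    ((-1 : KK) ^ s) • (fdp C i s * gf j * fdp C i ((1 - C.a i j).toNat - s))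

/-- The defining relations of the quantum group `U_q(𝔤)`. -/
inductive QRel [DecidableEq I] (C : CartanData I) : FA I → FA I → Prop
  | t_tinv (i : I) : QRel C (gT i * gTinv i) 1
  | tinv_t (i : I) : QRel C (gTinv i * gT i) 1
  | t_t (i j : I) : QRel C (gT i * gT j) (gT j * gT i)
  | t_tinv_comm (i j : I) : QRel C (gT i * gTinv j) (gTinv j * gT i)
  | t_e (i j : I) : QRel C (gT i * ge j) (qpow (C.d i * C.a i j) • (ge j * gT i))
  | t_f (i j : I) : QRel C (gT i * gf j) (qpow (-(C.d i * C.a i j)) • (gf j * gT i))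
  | e_f (i j : I) :
      QRel C (ge i * gf j - gf j * ge i)
        (if i = j then (qpow (C.d i) - qpow (-C.d i))⁻¹ • (gT i - gTinv i) else 0)
  | serre_e (i j : I) : i ≠ j → QRel C (serreE C i j) 0
  | serre_f (i j : I) : i ≠ j → QRel C (serreF C i j) 0

/-- The quantum group `U_q(𝔤)`, presented by generators and relations. -/
abbrev Uq [DecidableEq I] (C : CartanData I) : Type := RingQuot (QRel C)

variable [DecidableEq I]

/-- The canonical map from the free algebra onto `U_q(𝔤)`. -/
def uMk (C : CartanData I) : FA I →ₐ[KK] Uq C := RingQuot.mkAlgHom KK (QRel C)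

def uE (C : CartanData I) (i : I) : Uq C := uMk C (ge i)
def uF (C : CartanData I) (i : I) : Uq C := uMk C (gf i)
def uT (C : CartanData I) (i : I) : Uq C := uMk C (gT i)
def uTinv (C : CartanData I) (i : I) : Uq C := uMk C (gTinv i)

/-- Divided power `e_i^{(s)} ∈ U_q(𝔤)`. -/
def uEdp (C : CartanData I) (i : I) (s : ℕ) : Uq C := (qfact (C.d i) s)⁻¹ • uE C i ^ s

/-- Divided power `f_i^{(s)} ∈ U_q(𝔤)`. -/
def uFdp (C : CartanData I) (i : I) (s : ℕ) : Uq C := (qfact (C.d i) s)⁻¹ • uF C i ^ s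

/-- The negative half `U_q^-(𝔤)`, the subalgebra generated by the `f_i`. -/
def Uneg (C : CartanData I) : Subalgebra KK (Uq C) :=
  Algebra.adjoin KK (Set.range (uF C))

/-- The weight `-β` component of `U_q^-(𝔤)` (spanned by monomials in the `f_i` of
content `β ∈ Q_+`). -/
def negWt (C : CartanData I) (β : I →₀ ℕ) : Submodule KK (Uq C) :=
  Submodule.span KK
    {u | ∃ w : List I, (∀ j, w.count j = β j) ∧ u = (w.map (uF C)).prod}

/-- The pairing `(α_i, β) = Σ_j β_j (α_i, α_j)` for `β ∈ Q_+`. -/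
def pairB (C : CartanData I) (i : I) (β : I →₀ ℕ) : ℤ :=
  β.sum fun j m => C.d i * C.a i j * (m : ℤ)

/-- `f_j` as an element of the subalgebra `U_q^-(𝔤)`. -/
def uFneg (C : CartanData I) (j : I) : ↥(Uneg C) :=
  ⟨uF C j, Algebra.subset_adjoin ⟨j, rfl⟩⟩

/-- `t_i^m` for `m ∈ ℤ`. -/
def tpow (C : CartanData I) (i : I) (m : ℤ) : Uq C :=
  if 0 ≤ m then uT C i ^ m.toNat else uTinv C i ^ (-m).toNat

/-- Generators of the parabolic quantum group `U_q(𝔭_J)`: `e_j` only for `j ∈ J`. -/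
inductive QGenP (I : Type) (J : Set I) : Type
  | e : ↥J → QGenP I J
  | f : I → QGenP I J
  | t : I → QGenP I J
  | tinv : I → QGenP I J

/-- The free algebra on the generators of `U_q(𝔭_J)`. -/
abbrev FAP (I : Type) (J : Set I) : Type := FreeAlgebra KK (QGenP I J)

def pge (J : Set I) (j : ↥J) : FAP I J := FreeAlgebra.ι KK (QGenP.e j)
def pgf (J : Set I) (i : I) : FAP I J := FreeAlgebra.ι KK (QGenP.f i)
def pgT (J : Set I) (i : I) : FAP I J := FreeAlgebra.ι KK (QGenP.t i)
def pgTinv (J : Set I) (i : I) : FAP I J := FreeAlgebra.ι KK (QGenP.tinv i)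

def pedp (C : CartanData I) (J : Set I) (j : ↥J) (s : ℕ) : FAP I J :=
  (qfact (C.d j) s)⁻¹ • pge J j ^ s

def pfdp (C : CartanData I) (J : Set I) (i : I) (s : ℕ) : FAP I J :=
  (qfact (C.d i) s)⁻¹ • pgf J i ^ s

def pserreE (C : CartanData I) (J : Set I) (i j : ↥J) : FAP I J :=
  ∑ s ∈ Finset.range ((1 - C.a i j).toNat + 1),
    ((-1 : KK) ^ s) • (pedp C J i s * pge J j * pedp C J i ((1 - C.a i j).toNat - s))

def pserreF (C : CartanData I) (J : Set I) (i j : I) : FAP I J :=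
  ∑ s ∈ Finset.range ((1 - C.a i j).toNat + 1),
    ((-1 : KK) ^ s) • (pfdp C J i s * pgf J j * pfdp C J i ((1 - C.a i j).toNat - s))

/-- The defining relations of the parabolic quantum group `U_q(𝔭_J)`. -/
inductive QRelP [DecidableEq I] (C : CartanData I) (J : Set I) : FAP I J → FAP I J → Prop
  | t_tinv (i : I) : QRelP C J (pgT J i * pgTinv J i) 1
  | tinv_t (i : I) : QRelP C J (pgTinv J i * pgT J i) 1
  | t_t (i j : I) : QRelP C J (pgT J i * pgT J j) (pgT J j * pgT J i)
  | t_tinv_comm (i j : I) : QRelP C J (pgT J i * pgTinv J j) (pgTinv J j * pgT J i)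
  | t_e (i : I) (j : ↥J) :
      QRelP C J (pgT J i * pge J j) (qpow (C.d i * C.a i j) • (pge J j * pgT J i))
  | t_f (i j : I) :
      QRelP C J (pgT J i * pgf J j) (qpow (-(C.d i * C.a i j)) • (pgf J j * pgT J i))
  | e_f (i : ↥J) (j : I) :
      QRelP C J (pge J i * pgf J j - pgf J j * pge J i)
        (if (i : I) = j then
            (qpow (C.d i) - qpow (-C.d (i : I)))⁻¹ • (pgT J i - pgTinv J i)
          else 0)
  | serre_e (i j : ↥J) : (i : I) ≠ (j : I) → QRelP C J (pserreE C J i j) 0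
  | serre_f (i j : I) : i ≠ j → QRelP C J (pserreF C J i j) 0

/-- The parabolic quantum group `U_q(𝔭_J)`, presented by generators and relations. -/
abbrev UqP [DecidableEq I] (C : CartanData I) (J : Set I) : Type := RingQuot (QRelP C J)

def pMk (C : CartanData I) (J : Set I) : FAP I J →ₐ[KK] UqP C J :=
  RingQuot.mkAlgHom KK (QRelP C J)

def pE (C : CartanData I) (J : Set I) (j : ↥J) : UqP C J := pMk C J (pge J j)
def pF (C : CartanData I) (J : Set I) (i : I) : UqP C J := pMk C J (pgf J i)
def pT (C : CartanData I) (J : Set I) (i : I) : UqP C J := pMk C J (pgT J i)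
def pTinv (C : CartanData I) (J : Set I) (i : I) : UqP C J := pMk C J (pgTinv J i)

/-- `U_q^-(𝔭_J)`, the subalgebra of `U_q(𝔭_J)` generated by the `f_i`, `i ∈ I`. -/
def Pneg (C : CartanData I) (J : Set I) : Subalgebra KK (UqP C J) :=
  Algebra.adjoin KK (Set.range (pF C J))

/-- `U_q^0(𝔭_J)`, the subalgebra of `U_q(𝔭_J)` generated by the `q^h`. -/
def Pzero (C : CartanData I) (J : Set I) : Subalgebra KK (UqP C J) :=
  Algebra.adjoin KK (Set.range (pT C J) ∪ Set.range (pTinv C J))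

/-- `U_q^+(𝔭_J)`, the subalgebra of `U_q(𝔭_J)` generated by the `e_j`, `j ∈ J`. -/
def Ppos (C : CartanData I) (J : Set I) : Subalgebra KK (UqP C J) :=
  Algebra.adjoin KK (Set.range (pE C J))

/-- The multiplication map `U_q^-(𝔭_J) ⊗ U_q^0(𝔭_J) ⊗ U_q^+(𝔭_J) → U_q(𝔭_J)`,
`x ⊗ y ⊗ z ↦ xyz`. -/
def triMul (C : CartanData I) (J : Set I) :
    (↥(Pneg C J) ⊗[KK] ↥(Pzero C J)) ⊗[KK] ↥(Ppos C J) →ₗ[KK] UqP C J :=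
  (LinearMap.mul' KK (UqP C J)).comp
    (TensorProduct.map
      ((LinearMap.mul' KK (UqP C J)).comp
        (TensorProduct.map (Pneg C J).val.toLinearMap (Pzero C J).val.toLinearMap))
      (Ppos C J).val.toLinearMap)


set_option linter.unusedSectionVars false

/-! ### General lemmas on Serre elements -/

theorem qq_ne_zero : qq ≠ 0 := RatFunc.X_ne_zero

theorem qpow_add (m n : ℤ) : qpow (m + n) = qpow m * qpow n := zpow_add₀ qq_ne_zero m n

theorem qpow_zero : qpow 0 = 1 := zpow_zero _

theorem qpow_ne_zero (m : ℤ) : qpow m ≠ 0 := zpow_ne_zero _ qq_ne_zero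

theorem qpow_nat_ne_one (n : ℕ) (hn : 0 < n) : qpow n ≠ 1 := by
  intro h
  have h1 : algebraMap (Polynomial ℚ) KK (Polynomial.X ^ n) = algebraMap (Polynomial ℚ) KK 1 := by
    rw [map_pow, RatFunc.algebraMap_X, map_one]
    simpa [qpow, qq] using h
  have h2 := RatFunc.algebraMap_injective ℚ h1
  have h3 := congrArg Polynomial.natDegree h2
  simp at h3
  omega

theorem qpow_sub_ne_zero (m : ℤ) (hm : 0 < m) : qpow m - qpow (-m) ≠ 0 := by
  intro h
  have h1 : qpow m = qpow (-m) := sub_eq_zero.mp h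
  have h2 : qpow (m + m) = 1 := by
    rw [qpow_add]
    nth_rewrite 2 [h1]
    rw [← qpow_add, add_neg_cancel, qpow_zero]
  obtain ⟨n, hn⟩ := Int.eq_ofNat_of_zero_le (show 0 ≤ m + m by omega)
  rw [hn] at h2
  exact qpow_nat_ne_one n (by omega) h2

theorem qint_ne_zero (d n : ℤ) (hd : 0 < d) (hn : 0 < n) : qint d n ≠ 0 :=
  div_ne_zero (qpow_sub_ne_zero _ (mul_pos hd hn)) (qpow_sub_ne_zero _ hd)

theorem qint_split (d s r : ℤ) :
    qint d (s + r) = qpow (-(d * r)) * qint d s + qpow (d * s) * qint d r := by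
  unfold qint
  rw [mul_div_assoc', mul_div_assoc', ← add_div]
  congr 1
  simp only [mul_sub, ← qpow_add]
  ring_nf

theorem qint_zero (d : ℤ) : qint d 0 = 0 := by simp [qint]

section Aux

variable {k R : Type} [Field k] [AddCommGroup R] [Module k R]

theorem aux_j (c q0 qn qp q2 : k) (A B : R) (h1 : q0 * qn = 1) (h2 : q0 * qp = q2) :
    c • A - c • B - ((q0 * (c * qn)) • A - (q0 * (c * qp)) • B) = (-c * (1 - q2)) • B := by
  rw [mul_left_comm, h1, mul_left_comm, h2]
  module

theorem aux_i1 (c n p : k) (A B X Y Z V : R) :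
    X + ((c * n) • A - (c * p) • B) - p • Y - (Z - p • (V - (c • A - c • B))) =
      (c * n - c * p) • A + (X - Z - p • (Y - V)) := by
  module

theorem aux_i2 (c w S p : k) (A B : R) :
    (c * w) • (A - p • B) + ((c * S) • A - (c * (S * p)) • B) = (c * (S + w)) • (A - p • B) := by
  module

end Aux

section SerreGen

variable {R : Type} [Ring R] [Algebra KK R]

def dpw (d : ℤ) (x : R) (s : ℕ) : R := (qfact d s)⁻¹ • x ^ s

/-- The Serre element in any algebra. -/
def ser (d a : ℤ) (x y : R) : R :=
  ∑ s ∈ Finset.range ((1 - a).toNat + 1),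
    ((-1 : KK) ^ s) • (dpw d x s * y * dpw d x ((1 - a).toNat - s))

theorem map_dpw {S : Type} [Ring S] [Algebra KK S] (g : R →ₐ[KK] S) (d : ℤ) (x : R) (s : ℕ) :
    g (dpw d x s) = dpw d (g x) s := by
  simp [dpw]

theorem map_ser {S : Type} [Ring S] [Algebra KK S] (g : R →ₐ[KK] S) (d a : ℤ) (x y : R) :
    g (ser d a x y) = ser d a (g x) (g y) := by
  simp [ser, map_dpw]

/-- Iterated `q`-commutator. -/
def uu (d a : ℤ) (x y : R) : ℕ → R
  | 0 => y
  | m + 1 => x * uu d a x y m - qpow (d * (a + 2 * m)) • (uu d a x y m * x)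

theorem x_dpw (d : ℤ) (hd : 0 < d) (x : R) (s : ℕ) :
    x * dpw d x s = qint d (s + 1) • dpw d x (s + 1) := by
  have h := qint_ne_zero d (s + 1) hd (by omega)
  rw [dpw, dpw, qfact, mul_inv, smul_smul, mul_comm (qfact d s)⁻¹, ← mul_assoc,
    mul_inv_cancel₀ h, one_mul, mul_smul_comm, pow_succ']

theorem dpw_x (d : ℤ) (hd : 0 < d) (x : R) (s : ℕ) :
    dpw d x s * x = qint d (s + 1) • dpw d x (s + 1) := by
  rw [← x_dpw d hd, dpw, smul_mul_assoc, mul_smul_comm, pow_mul_comm']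

def vv (d a : ℤ) (x y : R) (m : ℕ) : R :=
  ∑ p ∈ Finset.HasAntidiagonal.antidiagonal m, ((-1 : KK) ^ p.2 * qpow (d * (p.2 * (a + m - 1)))) •
    (dpw d x p.1 * y * dpw d x p.2)

theorem vv_succ (d a : ℤ) (hd : 0 < d) (x y : R) (m : ℕ) :
    qint d (m + 1) • vv d a x y (m + 1) =
      x * vv d a x y m - qpow (d * (a + 2 * m)) • (vv d a x y m * x) := by
  have key : qint d (m + 1) • vv d a x y (m + 1) =
      ∑ p ∈ Finset.HasAntidiagonal.antidiagonal (m + 1),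
        ((-1 : KK) ^ p.2 * qpow (d * (p.2 * (a + m - 1))) * qint d p.1) •
          (dpw d x p.1 * y * dpw d x p.2) +
      ∑ p ∈ Finset.HasAntidiagonal.antidiagonal (m + 1),
        ((-1 : KK) ^ p.2 * qpow (d * (p.2 * (a + m) + p.1)) * qint d p.2) •
          (dpw d x p.1 * y * dpw d x p.2) := by
    rw [vv, Finset.smul_sum, ← Finset.sum_add_distrib]
    refine Finset.sum_congr rfl fun p hp => ?_
    rw [smul_smul, ← add_smul]
    congr 1
    have hp' : p.1 + p.2 = m + 1 := by simpa using hp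
    have hz : ((m : ℤ) + 1) = p.1 + p.2 := by exact_mod_cast hp'.symm
    rw [hz, qint_split]
    have e1 : qpow (d * (p.2 * (a + m - 1))) =
        qpow (d * (p.2 * (a + (m + 1 : ℕ) - 1))) * qpow (-(d * p.2)) := by
      rw [← qpow_add]; congr 1; push_cast; ring
    have e2 : qpow (d * (p.2 * (a + m) + p.1)) =
        qpow (d * (p.2 * (a + (m + 1 : ℕ) - 1))) * qpow (d * p.1) := by
      rw [← qpow_add]; congr 1; push_cast; ring
    rw [e1, e2]
    ring
  rw [key, Finset.Nat.sum_antidiagonal_succ, Finset.Nat.sum_antidiagonal_succ']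
  simp only [Nat.cast_zero, qint_zero, mul_zero, zero_smul, zero_add]
  rw [sub_eq_add_neg (x * vv d a x y m)]
  refine congrArg₂ (fun z w : R => z + w) ?_ ?_
  · rw [vv, Finset.mul_sum]
    refine Finset.sum_congr rfl fun p hp => ?_
    rw [mul_smul_comm, ← mul_assoc x, ← mul_assoc x, x_dpw d hd, smul_mul_assoc, smul_mul_assoc,
      smul_smul]
    push_cast
    rfl
  · rw [vv, Finset.sum_mul, Finset.smul_sum, ← Finset.sum_neg_distrib]
    refine Finset.sum_congr rfl fun p hp => ?_
    have hp' : p.1 + p.2 = m := by simpa using hp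
    have hz : (m : ℤ) = p.1 + p.2 := by exact_mod_cast hp'.symm
    rw [smul_mul_assoc, mul_assoc (dpw d x p.1 * y), dpw_x d hd, mul_smul_comm, smul_smul, smul_smul, ← neg_smul]
    congr 1
    have e2 : qpow (d * ((p.2 + 1 : ℕ) * (a + m) + p.1)) =
        qpow (d * (a + 2 * m)) * qpow (d * (p.2 * (a + m - 1))) := by
      rw [← qpow_add]; congr 1; rw [hz]; push_cast; ring
    rw [e2]
    push_cast
    ring

theorem uu_eq (d a : ℤ) (hd : 0 < d) (x y : R) (m : ℕ) :
    uu d a x y m = qfact d m • vv d a x y m := by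
  induction m with
  | zero => simp [uu, vv, qfact, dpw, qpow_zero]
  | succ m ih =>
    rw [uu, ih, qfact, mul_smul, vv_succ d a hd, smul_sub, mul_smul_comm, smul_mul_assoc,
      smul_comm (qfact d m) (qpow _)]

theorem qfact_ne_zero (d : ℤ) (hd : 0 < d) (m : ℕ) : qfact d m ≠ 0 := by
  induction m with
  | zero => simp [qfact]
  | succ m ih => exact mul_ne_zero ih (qint_ne_zero d _ hd (by omega))

theorem ser_eq (d a : ℤ) (hd : 0 < d) (ha : a ≤ 0) (x y : R) :
    ser d a x y = ((-1) ^ (1 - a).toNat * (qfact d (1 - a).toNat)⁻¹) •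
      uu d a x y (1 - a).toNat := by
  set n := (1 - a).toNat with hn
  have hn' : (n : ℤ) = 1 - a := by omega
  rw [uu_eq d a hd, smul_smul, mul_assoc, inv_mul_cancel₀ (qfact_ne_zero d hd n), mul_one,
    vv, Finset.smul_sum, ser, ← hn,
    ← Finset.Nat.sum_antidiagonal_eq_sum_range_succ
      (fun s r => ((-1 : KK) ^ s) • (dpw d x s * y * dpw d x r))]
  refine Finset.sum_congr rfl fun p hp => ?_
  have hp' : p.1 + p.2 = n := by simpa using hp
  rw [smul_smul]
  congr 1
  rw [hn', show d * (p.2 * (a + (1 - a) - 1)) = 0 by ring, qpow_zero, mul_one, ← hp', pow_add,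
    mul_assoc, ← mul_pow]
  simp

theorem ser_comm_other (d a : ℤ) (x y E : R) (hx : Commute E x) (hy : Commute E y) :
    Commute E (ser d a x y) := by
  unfold ser dpw
  refine Commute.sum_right _ _ _ fun s _ => ?_
  refine Commute.smul_right ?_ _
  exact (((hx.pow_right _).smul_right _).mul_right hy).mul_right ((hx.pow_right _).smul_right _)

theorem ser_comm_j (d a : ℤ) (hd : 0 < d) (ha : a ≤ 0) (x y E T T' : R) (c : KK)
    (hx : E * x = x * E)
    (hy : E * y - y * E = c • (T - T'))
    (hT : T * x = qpow (-(d * a)) • (x * T))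
    (hT' : T' * x = qpow (d * a) • (x * T')) :
    Commute E (ser d a x y) := by
  have key : ∀ m : ℕ, E * uu d a x y (m + 1) - uu d a x y (m + 1) * E =
      (-c * ∏ k ∈ Finset.range (m + 1), (1 - qpow (d * (2 * a + 2 * k)))) •
        (x ^ (m + 1) * T') := by
    have step : ∀ m : ℕ, E * uu d a x y (m + 1) - uu d a x y (m + 1) * E =
        x * (E * uu d a x y m - uu d a x y m * E) -
          qpow (d * (a + 2 * m)) • ((E * uu d a x y m - uu d a x y m * E) * x) := by
      intro m
      rw [uu]
      simp only [mul_sub, sub_mul, mul_smul_comm, smul_mul_assoc, smul_sub]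
      have h1 : E * (x * uu d a x y m) = x * (E * uu d a x y m) := by
        rw [← mul_assoc, hx, mul_assoc]
      rw [h1, mul_assoc (uu d a x y m) x E, ← hx]
      simp only [mul_assoc]
      abel
    intro m
    induction m with
    | zero =>
      rw [step, uu, hy]
      simp only [mul_smul_comm, smul_mul_assoc, mul_sub, sub_mul, hT, hT', smul_sub, smul_smul]
      simp only [Nat.cast_zero, mul_zero, add_zero, zero_add,
        Finset.range_one, Finset.prod_singleton, pow_one]
      refine aux_j _ _ _ _ _ _ _ ?_ ?_
      · rw [← qpow_add, add_neg_cancel, qpow_zero]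
      · rw [← qpow_add]; congr 1; ring
    | succ m ih =>
      rw [step, ih, Finset.prod_range_succ _ (m + 1)]
      simp only [mul_smul_comm, smul_mul_assoc, mul_assoc, hT', smul_smul]
      rw [← mul_assoc x, ← pow_succ', ← mul_assoc _ x T', ← pow_succ, ← sub_smul]
      congr 1
      have e : qpow (d * (2 * a + 2 * (m + 1 : ℕ))) =
          qpow (d * (a + 2 * (m + 1 : ℕ))) * qpow (d * a) := by
        rw [← qpow_add]; congr 1; ring
      rw [e]
      ring
  rw [ser_eq d a hd ha]
  refine Commute.smul_right ?_ _
  obtain ⟨m, hm⟩ : ∃ m : ℕ, (1 - a).toNat = m + 1 := ⟨(-a).toNat, by omega⟩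
  have h := key m
  have h0 : (1 - qpow (d * (2 * a + 2 * (m : ℕ)))) = 0 := by
    rw [show d * (2 * a + 2 * (m : ℕ)) = 0 by
      have : (m : ℤ) = -a := by omega
      rw [this]; ring, qpow_zero, sub_self]
  rw [Finset.prod_range_succ, h0, mul_zero, mul_zero, zero_smul, sub_eq_zero] at h
  rw [hm]
  exact h

theorem ser_comm_i (d a : ℤ) (hd : 0 < d) (ha : a ≤ 0) (x y E T T' : R) (c : KK)
    (hx : E * x - x * E = c • (T - T'))
    (hy : E * y = y * E)
    (hTx : T * x = qpow (-(d * 2)) • (x * T))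
    (hTx' : T' * x = qpow (d * 2) • (x * T'))
    (hTy : T * y = qpow (-(d * a)) • (y * T))
    (hTy' : T' * y = qpow (d * a) • (y * T')) :
    Commute E (ser d a x y) := by
  have hT : ∀ m : ℕ, T * uu d a x y m = qpow (-(d * (a + 2 * m))) • (uu d a x y m * T) := by
    intro m
    induction m with
    | zero => simpa [uu] using hTy
    | succ m ih =>
      have e : qpow (-(d * (a + 2 * (m + 1 : ℕ)))) =
          qpow (-(d * 2)) * qpow (-(d * (a + 2 * m))) := by
        rw [← qpow_add]; congr 1; push_cast; ring
      rw [e, uu, mul_sub, sub_mul, smul_sub, ← mul_assoc, hTx, smul_mul_assoc, mul_assoc x T, ih,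
        mul_smul_comm, mul_smul_comm, ← mul_assoc T, ih, smul_mul_assoc, mul_assoc _ T x, hTx]
      simp only [mul_smul_comm, smul_mul_assoc, smul_smul, mul_assoc]
      congr 2
      ring
  have hT' : ∀ m : ℕ, T' * uu d a x y m = qpow (d * (a + 2 * m)) • (uu d a x y m * T') := by
    intro m
    induction m with
    | zero => simpa [uu] using hTy'
    | succ m ih =>
      have e : qpow (d * (a + 2 * (m + 1 : ℕ))) =
          qpow (d * 2) * qpow (d * (a + 2 * m)) := by
        rw [← qpow_add]; congr 1; push_cast; ring
      rw [e, uu, mul_sub, sub_mul, smul_sub, ← mul_assoc, hTx', smul_mul_assoc, mul_assoc x T', ih,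
        mul_smul_comm, mul_smul_comm, ← mul_assoc T', ih, smul_mul_assoc, mul_assoc _ T' x, hTx']
      simp only [mul_smul_comm, smul_mul_assoc, smul_smul, mul_assoc]
      congr 2
      ring
  have step : ∀ m : ℕ, E * uu d a x y (m + 1) - uu d a x y (m + 1) * E =
      (c * (qpow (-(d * (a + 2 * m))) - qpow (d * (a + 2 * m)))) • (uu d a x y m * T) +
      (x * (E * uu d a x y m - uu d a x y m * E) -
          qpow (d * (a + 2 * m)) • ((E * uu d a x y m - uu d a x y m * E) * x)) := by
    intro m
    have h1 : E * x = x * E + c • (T - T') := by rw [← hx]; abel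
    have h2 : x * E = E * x - c • (T - T') := by rw [← hx]; abel
    have h3 : E * (x * uu d a x y m) = x * (E * uu d a x y m) +
        ((c * qpow (-(d * (a + 2 * m)))) • (uu d a x y m * T) -
          (c * qpow (d * (a + 2 * m))) • (uu d a x y m * T')) := by
      rw [← mul_assoc, h1, add_mul, mul_assoc, smul_mul_assoc, sub_mul, hT, hT', smul_sub,
        smul_smul, smul_smul]
    have h4 : uu d a x y m * (x * E) = uu d a x y m * (E * x) -
        (c • (uu d a x y m * T) - c • (uu d a x y m * T')) := by
      rw [h2, mul_sub, mul_smul_comm, mul_sub, smul_sub]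
    rw [uu]
    simp only [mul_sub, sub_mul, mul_smul_comm, smul_mul_assoc, mul_assoc]
    rw [h3, h4]
    exact aux_i1 _ _ _ _ _ _ _ _ _
  have key : ∀ m : ℕ, E * uu d a x y (m + 1) - uu d a x y (m + 1) * E =
      (c * ∑ k ∈ Finset.range (m + 1),
        (qpow (-(d * (a + 2 * k))) - qpow (d * (a + 2 * k)))) • (uu d a x y m * T) := by
    intro m
    induction m with
    | zero =>
      rw [step]
      simp [uu, hy]
    | succ m ih =>
      rw [step, ih, Finset.sum_range_succ _ (m + 1)]
      simp only [mul_smul_comm, smul_mul_assoc, mul_assoc _ T x, hTx, smul_smul]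
      have e : qpow (d * (a + 2 * (m + 1 : ℕ))) = qpow (d * 2) * qpow (d * (a + 2 * m)) := by
        rw [← qpow_add]; congr 1; push_cast; ring
      have e2 : qpow (d * 2) * qpow (-(d * 2)) = 1 := by
        rw [← qpow_add, add_neg_cancel, qpow_zero]
      rw [show uu d a x y (m + 1) = x * uu d a x y m - qpow (d * (a + 2 * m)) • (uu d a x y m * x)
        from rfl]
      set S := ∑ k ∈ Finset.range (m + 1),
        (qpow (-(d * (a + 2 * k))) - qpow (d * (a + 2 * k))) with hS
      have e3 : qpow (d * (a + 2 * (m + 1 : ℕ))) * (c * S * qpow (-(d * 2))) =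
          c * S * qpow (d * (a + 2 * m)) := by
        rw [e]; linear_combination (c * S * qpow (d * (a + 2 * m))) * e2
      rw [e3]
      simp only [sub_mul, smul_mul_assoc, mul_assoc]
      exact aux_i2 _ _ _ _ _ _
  rw [ser_eq d a hd ha]
  refine Commute.smul_right ?_ _
  obtain ⟨m, hm⟩ : ∃ m : ℕ, (1 - a).toNat = m + 1 := ⟨(-a).toNat, by omega⟩
  have h := key m
  have h0 : ∑ k ∈ Finset.range (m + 1),
        (qpow (-(d * (a + 2 * k))) - qpow (d * (a + 2 * k))) = 0 := by
    rw [Finset.sum_sub_distrib, sub_eq_zero,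
      ← Finset.sum_range_reflect (fun k : ℕ => qpow (d * (a + 2 * k)))]
    refine Finset.sum_congr rfl fun k hk => ?_
    have hk' : k < m + 1 := by simpa using hk
    congr 1
    have : ((m + 1 - 1 - k : ℕ) : ℤ) = -a - k := by omega
    rw [this]
    ring
  rw [h0, mul_zero, zero_smul, sub_eq_zero] at h
  rw [hm]
  exact h

theorem ser_factor (d a : ℤ) (P Q P' Q' : R) (hPP : Commute P P') (hPQ : Commute P Q)
    (hPQ' : Commute P Q') (hP'Q : Commute P' Q) :
    ser d a (P * Q) (P' * Q') = P ^ (1 - a).toNat * P' * ser d a Q Q' := by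
  unfold ser
  rw [Finset.mul_sum]
  refine Finset.sum_congr rfl fun s hs => ?_
  have hs' : s < (1 - a).toNat + 1 := by simpa using hs
  obtain ⟨r, hr⟩ : ∃ r, (1 - a).toNat = s + r := ⟨(1 - a).toNat - s, by omega⟩
  rw [hr, show s + r - s = r by omega]
  unfold dpw
  simp only [mul_smul_comm, smul_mul_assoc]
  congr 3
  rw [hPQ.mul_pow, hPQ.mul_pow, pow_add]
  have h1 : Q ^ s * P' = P' * Q ^ s := ((hP'Q.pow_right s).eq).symm
  have h2 : Q' * P ^ r = P ^ r * Q' := ((hPQ'.pow_left r).eq).symm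
  have h3 : Q ^ s * P ^ r = P ^ r * Q ^ s := ((hPQ.pow_pow r s).eq).symm
  have h4 : P' * P ^ r = P ^ r * P' := ((hPP.pow_left r).eq).symm
  calc P ^ s * Q ^ s * (P' * Q') * (P ^ r * Q ^ r)
      = P ^ s * (Q ^ s * P') * (Q' * P ^ r) * Q ^ r := by simp only [mul_assoc]
    _ = P ^ s * P' * (Q ^ s * P ^ r) * Q' * Q ^ r := by rw [h1, h2]; simp only [mul_assoc]
    _ = P ^ s * (P' * P ^ r) * Q ^ s * Q' * Q ^ r := by rw [h3]; simp only [mul_assoc]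
    _ = _ := by rw [h4]; simp only [mul_assoc]

theorem tinv_rel (T T' x : R) (c : KK) (hc : c ≠ 0) (h1 : T * T' = 1) (h2 : T' * T = 1)
    (h : T * x = c • (x * T)) : T' * x = c⁻¹ • (x * T') := by
  have h3 : T' * (T * x) * T' = c • (T' * x * (T * T')) := by
    rw [h, mul_smul_comm, smul_mul_assoc]; simp only [mul_assoc]
  rw [h1, ← mul_assoc, h2, one_mul, mul_one] at h3
  rw [h3, smul_smul, inv_mul_cancel₀ hc, one_smul]

end SerreGen


/-! ### The induced module -/

/-- A module over the Borel part. -/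
structure BRep (C : CartanData I) (W : Type) [AddCommGroup W] [Module KK W] where
  T : I → Module.End KK W
  T' : I → Module.End KK W
  E : I → Module.End KK W
  TT' : ∀ i, T i * T' i = 1
  T'T : ∀ i, T' i * T i = 1
  comm : ∀ i j, T i * T j = T j * T i
  comm' : ∀ i j, T i * T' j = T' j * T i
  TE : ∀ i j, T i * E j = qpow (C.d i * C.a i j) • (E j * T i)
  serre : ∀ i j, i ≠ j → ser (C.d i) (C.a i j) (E i) (E j) = 0

section Induced

variable {W : Type} [AddCommGroup W] [Module KK W]

abbrev VV (I W : Type) [AddCommGroup W] : Type := List I →₀ W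

def opF (W : Type) [AddCommGroup W] [Module KK W] (k : I) : Module.End KK (VV I W) :=
  Finsupp.lmapDomain W KK (List.cons k)

theorem opF_single (k : I) (w : List I) (x : W) :
    opF W k (Finsupp.single w x) = Finsupp.single (k :: w) x := by
  simp [opF]

theorem end_ext (A B : Module.End KK (VV I W))
    (h0 : ∀ x, A (Finsupp.single [] x) = B (Finsupp.single [] x))
    (h1 : ∀ k v, A v = B v → A (opF W k v) = B (opF W k v)) : A = B := by
  have : ∀ (w : List I) (x : W), A (Finsupp.single w x) = B (Finsupp.single w x) := by
    intro w x
    induction w with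
    | nil => exact h0 x
    | cons k w ih => rw [← opF_single]; exact h1 k _ ih
  exact Finsupp.lhom_ext this

def wordT (c : I → KK) (t : Module.End KK W) : List I → (W →ₗ[KK] VV I W)
  | [] => Finsupp.lsingle [] ∘ₗ t
  | k :: w => c k • (opF W k ∘ₗ wordT c t w)

def opTT (c : I → KK) (t : Module.End KK W) : Module.End KK (VV I W) :=
  Finsupp.lsum KK (wordT c t)

theorem opTT_nil (c : I → KK) (t : Module.End KK W) (x : W) :
    opTT c t (Finsupp.single [] x) = Finsupp.single [] (t x) := by
  simp [opTT, wordT]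

theorem opTT_F (c : I → KK) (t : Module.End KK W) (k : I) :
    opTT c t * opF W k = c k • (opF W k * opTT c t) := by
  refine Finsupp.lhom_ext fun w x => ?_
  simp [opF_single, opTT, wordT]

variable {C : CartanData I}

namespace BRep

variable (ρ : BRep C W)

def cT (C : CartanData I) (i : I) : I → KK := fun k => qpow (-(C.d i * C.a i k))
def cT' (C : CartanData I) (i : I) : I → KK := fun k => qpow (C.d i * C.a i k)

def oT (i : I) : Module.End KK (VV I W) := opTT (cT C i) (ρ.T i)
def oT' (i : I) : Module.End KK (VV I W) := opTT (cT' C i) (ρ.T' i)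

def wordE (i : I) : List I → (W →ₗ[KK] VV I W)
  | [] => Finsupp.lsingle [] ∘ₗ ρ.E i
  | k :: w => opF W k ∘ₗ wordE i w +
      if i = k then (qpow (C.d i) - qpow (-C.d i))⁻¹ •
        (wordT (cT C i) (ρ.T i) w - wordT (cT' C i) (ρ.T' i) w) else 0

def oE (i : I) : Module.End KK (VV I W) := Finsupp.lsum KK (ρ.wordE i)

theorem oE_nil (i : I) (x : W) :
    ρ.oE i (Finsupp.single [] x) = Finsupp.single [] (ρ.E i x) := by
  simp [oE, wordE]

theorem oE_F (i k : I) :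
    ρ.oE i * opF W k = opF W k * ρ.oE i + if i = k then (qpow (C.d i) - qpow (-C.d i))⁻¹ •
        (ρ.oT i - ρ.oT' i) else 0 := by
  refine Finsupp.lhom_ext fun w x => ?_
  by_cases h : i = k
  · subst h
    simp [opF_single, oE, wordE, oT, oT', opTT]
  · simp [opF_single, oE, wordE, h]

theorem oT_F (i k : I) :
    ρ.oT i * opF W k = qpow (-(C.d i * C.a i k)) • (opF W k * ρ.oT i) := opTT_F _ _ _

theorem oT'_F (i k : I) :
    ρ.oT' i * opF W k = qpow (C.d i * C.a i k) • (opF W k * ρ.oT' i) := opTT_F _ _ _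

theorem oT_F_apply (i k : I) (v : VV I W) :
    ρ.oT i (opF W k v) = qpow (-(C.d i * C.a i k)) • (opF W k (ρ.oT i v)) :=
  LinearMap.congr_fun (ρ.oT_F i k) v

theorem oT'_F_apply (i k : I) (v : VV I W) :
    ρ.oT' i (opF W k v) = qpow (C.d i * C.a i k) • (opF W k (ρ.oT' i v)) :=
  LinearMap.congr_fun (ρ.oT'_F i k) v

theorem oE_F_apply (i k : I) (v : VV I W) :
    ρ.oE i (opF W k v) = opF W k (ρ.oE i v) +
      if i = k then (qpow (C.d i) - qpow (-C.d i))⁻¹ • (ρ.oT i v - ρ.oT' i v) else 0 := by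
  have h := LinearMap.congr_fun (ρ.oE_F i k) v
  by_cases hik : i = k
  · simpa [hik] using h
  · simpa [hik] using h

theorem oT_nil (i : I) (x : W) :
    ρ.oT i (Finsupp.single [] x) = Finsupp.single [] (ρ.T i x) := opTT_nil _ _ _

theorem oT'_nil (i : I) (x : W) :
    ρ.oT' i (Finsupp.single [] x) = Finsupp.single [] (ρ.T' i x) := opTT_nil _ _ _

theorem oTT' (i : I) : ρ.oT i * ρ.oT' i = 1 := by
  refine end_ext _ _ (fun x => ?_) fun k v h => ?_
  · have := LinearMap.congr_fun (ρ.TT' i) x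
    simp only [Module.End.mul_apply, Module.End.one_apply] at this ⊢
    rw [oT'_nil, oT_nil, this]
  · simp only [Module.End.mul_apply, Module.End.one_apply] at h ⊢
    rw [oT'_F_apply, map_smul, oT_F_apply, h, smul_smul, ← qpow_add, add_neg_cancel, qpow_zero,
      one_smul]

theorem oT'T (i : I) : ρ.oT' i * ρ.oT i = 1 := by
  refine end_ext _ _ (fun x => ?_) fun k v h => ?_
  · have := LinearMap.congr_fun (ρ.T'T i) x
    simp only [Module.End.mul_apply, Module.End.one_apply] at this ⊢
    rw [oT_nil, oT'_nil, this]
  · simp only [Module.End.mul_apply, Module.End.one_apply] at h ⊢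
    rw [oT_F_apply, map_smul, oT'_F_apply, h, smul_smul, ← qpow_add, neg_add_cancel, qpow_zero,
      one_smul]

theorem ocomm (i j : I) : ρ.oT i * ρ.oT j = ρ.oT j * ρ.oT i := by
  refine end_ext _ _ (fun x => ?_) fun k v h => ?_
  · have := LinearMap.congr_fun (ρ.comm i j) x
    simp only [Module.End.mul_apply] at this ⊢
    rw [oT_nil, oT_nil, oT_nil, oT_nil, this]
  · simp only [Module.End.mul_apply] at h ⊢
    rw [oT_F_apply, map_smul, oT_F_apply, h, oT_F_apply, map_smul, oT_F_apply, smul_comm]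

theorem ocomm' (i j : I) : ρ.oT i * ρ.oT' j = ρ.oT' j * ρ.oT i := by
  refine end_ext _ _ (fun x => ?_) fun k v h => ?_
  · have := LinearMap.congr_fun (ρ.comm' i j) x
    simp only [Module.End.mul_apply] at this ⊢
    rw [oT'_nil, oT_nil, oT_nil, oT'_nil, this]
  · simp only [Module.End.mul_apply] at h ⊢
    rw [oT'_F_apply, map_smul, oT_F_apply, h, oT_F_apply, map_smul, oT'_F_apply, smul_comm]

theorem oTE (i j : I) : ρ.oT i * ρ.oE j = qpow (C.d i * C.a i j) • (ρ.oE j * ρ.oT i) := by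
  refine end_ext _ _ (fun x => ?_) fun k v h => ?_
  · have := LinearMap.congr_fun (ρ.TE i j) x
    simp only [Module.End.mul_apply, LinearMap.smul_apply] at this ⊢
    rw [oE_nil, oT_nil, oT_nil, oE_nil, this, Finsupp.smul_single]
  · have hc : ρ.oT i (ρ.oT j v) = ρ.oT j (ρ.oT i v) := LinearMap.congr_fun (ρ.ocomm i j) v
    have hc' : ρ.oT i (ρ.oT' j v) = ρ.oT' j (ρ.oT i v) := LinearMap.congr_fun (ρ.ocomm' i j) v
    simp only [Module.End.mul_apply, LinearMap.smul_apply] at h ⊢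
    by_cases hjk : j = k
    · subst hjk
      simp only [oE_F_apply, oT_F_apply, map_smul, map_add, map_sub, if_true, h, hc, hc',
        smul_add]
      simp only [smul_smul, ← qpow_add]
      simp only [← mul_assoc, ← qpow_add, add_neg_cancel, neg_add_cancel, qpow_zero, one_smul,
        one_mul]
    · simp only [oE_F_apply, oT_F_apply, map_smul, hjk, if_false, add_zero, h]
      rw [smul_comm]

theorem oT'E (i j : I) : ρ.oT' i * ρ.oE j = qpow (-(C.d i * C.a i j)) • (ρ.oE j * ρ.oT' i) := by
  rw [tinv_rel _ _ _ _ (qpow_ne_zero _) (ρ.oTT' i) (ρ.oT'T i) (ρ.oTE i j)]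
  congr 1
  simp [qpow]

/-- The `F`-Serre elements commute with all `E`. -/
theorem serF_comm (k i j : I) (hij : i ≠ j) :
    Commute (ρ.oE k) (ser (C.d i) (C.a i j) (opF W i) (opF W j)) := by
  have hd := C.d_pos i
  have ha := C.a_offdiag i j hij
  by_cases hki : k = i
  · subst hki
    refine ser_comm_i _ _ hd ha _ _ _ (ρ.oT k) (ρ.oT' k) ((qpow (C.d k) - qpow (-C.d k))⁻¹)
      ?_ ?_ ?_ ?_ ?_ ?_
    · rw [oE_F, if_pos rfl]; abel
    · rw [oE_F, if_neg hij, add_zero]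
    · rw [oT_F, C.a_diag]
    · rw [oT'_F, C.a_diag]
    · rw [oT_F]
    · rw [oT'_F]
  · by_cases hkj : k = j
    · subst hkj
      refine ser_comm_j _ _ hd ha _ _ _ (ρ.oT k) (ρ.oT' k) ((qpow (C.d k) - qpow (-C.d k))⁻¹)
        ?_ ?_ ?_ ?_
      · rw [oE_F, if_neg hki, add_zero]
      · rw [oE_F, if_pos rfl]; abel
      · rw [oT_F, C.symm]
      · rw [oT'_F, C.symm]
    · refine ser_comm_other _ _ _ _ _ ?_ ?_
      · rw [commute_iff_eq, oE_F, if_neg hki, add_zero]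
      · rw [commute_iff_eq, oE_F, if_neg hkj, add_zero]

/-- The `E`-Serre elements commute with all `F`. -/
theorem serE_comm (k i j : I) (hij : i ≠ j) :
    Commute (opF W k) (ser (C.d i) (C.a i j) (ρ.oE i) (ρ.oE j)) := by
  have hd := C.d_pos i
  have ha := C.a_offdiag i j hij
  have hself : ∀ k, opF W k * ρ.oE k - ρ.oE k * opF W k =
      (qpow (C.d k) - qpow (-C.d k))⁻¹ • (ρ.oT' k - ρ.oT k) := by
    intro k
    rw [oE_F, if_pos rfl, ← neg_sub (ρ.oT k) (ρ.oT' k), smul_neg]; abel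
  by_cases hki : k = i
  · subst hki
    refine ser_comm_i _ _ hd ha _ _ _ (ρ.oT' k) (ρ.oT k) ((qpow (C.d k) - qpow (-C.d k))⁻¹)
      (hself k) ?_ ?_ ?_ ?_ ?_
    · rw [oE_F, if_neg hij.symm, add_zero]
    · rw [oT'E, C.a_diag]
    · rw [oTE, C.a_diag]
    · rw [oT'E]
    · rw [oTE]
  · by_cases hkj : k = j
    · subst hkj
      refine ser_comm_j _ _ hd ha _ _ _ (ρ.oT' k) (ρ.oT k) ((qpow (C.d k) - qpow (-C.d k))⁻¹)
        ?_ (hself k) ?_ ?_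
      · rw [oE_F, if_neg hij, add_zero]
      · rw [oT'E, C.symm]
      · rw [oTE, C.symm]
    · refine ser_comm_other _ _ _ _ _ ?_ ?_
      · rw [commute_iff_eq, oE_F, if_neg (Ne.symm hki), add_zero]
      · rw [commute_iff_eq, oE_F, if_neg (Ne.symm hkj), add_zero]

theorem oE_pow_nil (i : I) (s : ℕ) (x : W) :
    (ρ.oE i ^ s) (Finsupp.single [] x) = Finsupp.single [] ((ρ.E i ^ s) x) := by
  induction s with
  | zero => simp
  | succ s ih => rw [pow_succ', pow_succ', Module.End.mul_apply, ih, oE_nil, Module.End.mul_apply]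

theorem oE_ser_nil (d a : ℤ) (i j : I) (x : W) :
    ser d a (ρ.oE i) (ρ.oE j) (Finsupp.single [] x) =
      Finsupp.single [] (ser d a (ρ.E i) (ρ.E j) x) := by
  simp only [ser, dpw, LinearMap.sum_apply, LinearMap.smul_apply, Module.End.mul_apply,
    oE_pow_nil, map_smul, oE_nil]
  rw [← Finsupp.lsingle_apply (R := KK), map_sum]
  simp only [Finsupp.lsingle_apply, Finsupp.smul_single]

theorem serE_zero (i j : I) (hij : i ≠ j) :
    ser (C.d i) (C.a i j) (ρ.oE i) (ρ.oE j) = 0 := by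
  refine end_ext _ _ (fun x => ?_) fun k v h => ?_
  · rw [oE_ser_nil, ρ.serre i j hij]
    simp
  · have hc := LinearMap.congr_fun (ρ.serE_comm k i j hij).eq v
    simp only [Module.End.mul_apply] at hc
    rw [← hc, h]
    simp

/-- The submodule to quotient by. -/
def NN (C : CartanData I) (W : Type) [AddCommGroup W] [Module KK W] : Submodule KK (VV I W) :=
  Submodule.span KK {v | ∃ (w : List I) (i j : I) (y : VV I W), i ≠ j ∧
    v = (w.map (opF W)).prod (ser (C.d i) (C.a i j) (opF W i) (opF W j) y)}

theorem NN_F (k : I) : NN C W ≤ (NN C W).comap (opF W k) := by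
  refine Submodule.span_le.mpr ?_
  rintro v ⟨w, i, j, y, hij, rfl⟩
  exact Submodule.subset_span ⟨k :: w, i, j, y, hij, by simp⟩

theorem NN_opTT (c : I → KK) (t : Module.End KK W) : NN C W ≤ (NN C W).comap (opTT c t) := by
  refine Submodule.span_le.mpr ?_
  rintro v ⟨w, i, j, y, hij, rfl⟩
  simp only [Submodule.comap_coe, Set.mem_preimage, SetLike.mem_coe]
  induction w with
  | nil =>
    have hpow : ∀ s : ℕ, opTT c t * opF W i ^ s = c i ^ s • (opF W i ^ s * opTT c t) := by
      intro s
      induction s with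
      | zero => simp
      | succ s ih =>
        rw [pow_succ, ← mul_assoc, ih, smul_mul_assoc, mul_assoc, opTT_F, mul_smul_comm,
          smul_smul, mul_assoc, pow_succ]
    have : opTT c t * ser (C.d i) (C.a i j) (opF W i) (opF W j) =
        (c i ^ (1 - C.a i j).toNat * c j) •
          (ser (C.d i) (C.a i j) (opF W i) (opF W j) * opTT c t) := by
      unfold ser dpw
      rw [Finset.mul_sum, Finset.sum_mul, Finset.smul_sum]
      refine Finset.sum_congr rfl fun s hs => ?_
      have hs' : s < (1 - C.a i j).toNat + 1 := by simpa using hs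
      obtain ⟨r, hr⟩ : ∃ r, (1 - C.a i j).toNat = s + r := ⟨(1 - C.a i j).toNat - s, by omega⟩
      rw [hr, show s + r - s = r by omega]
      simp only [mul_smul_comm, smul_mul_assoc]
      have : opTT c t * (opF W i ^ s * opF W j * opF W i ^ r) =
          (c i ^ (s + r) * c j) • (opF W i ^ s * opF W j * opF W i ^ r * opTT c t) := by
        rw [← mul_assoc, ← mul_assoc, hpow, smul_mul_assoc, mul_assoc (opF W i ^ s), opTT_F,
          mul_smul_comm, smul_mul_assoc, smul_mul_assoc, ← mul_assoc, mul_assoc _ (opTT c t), hpow,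
          mul_smul_comm, smul_smul, smul_smul, ← mul_assoc]
        congr 1
        ring
      rw [this]
      simp only [smul_smul]
      congr 1
      ring
    have h := LinearMap.congr_fun this y
    simp only [Module.End.mul_apply, LinearMap.smul_apply] at h
    simp only [List.map_nil, List.prod_nil, Module.End.one_apply]
    rw [h]
    refine Submodule.smul_mem _ _ (Submodule.subset_span ⟨[], i, j, opTT c t y, hij, ?_⟩)
    simp
  | cons k w ih =>
    simp only [List.map_cons, List.prod_cons, Module.End.mul_apply]
    have h := LinearMap.congr_fun (opTT_F c t k)
      ((w.map (opF W)).prod (ser (C.d i) (C.a i j) (opF W i) (opF W j) y))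
    simp only [Module.End.mul_apply, LinearMap.smul_apply] at h
    rw [h]
    exact Submodule.smul_mem _ _ (NN_F k ih)

theorem NN_E (k : I) : NN C W ≤ (NN C W).comap (ρ.oE k) := by
  refine Submodule.span_le.mpr ?_
  rintro v ⟨w, i, j, y, hij, rfl⟩
  simp only [Submodule.comap_coe, Set.mem_preimage, SetLike.mem_coe]
  induction w with
  | nil =>
    have h := LinearMap.congr_fun (ρ.serF_comm k i j hij).eq y
    simp only [Module.End.mul_apply] at h
    simp only [List.map_nil, List.prod_nil, Module.End.one_apply]
    rw [h]
    refine (Submodule.subset_span ⟨[], i, j, ρ.oE k y, hij, ?_⟩)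
    simp
  | cons l w ih =>
    simp only [List.map_cons, List.prod_cons, Module.End.mul_apply]
    rw [oE_F_apply]
    refine Submodule.add_mem _ (NN_F l ih) ?_
    split_ifs
    · have hm : ((w.map (opF W)).prod (ser (C.d i) (C.a i j) (opF W i) (opF W j) y)) ∈ NN C W :=
        Submodule.subset_span ⟨w, i, j, y, hij, rfl⟩
      exact Submodule.smul_mem _ _ (Submodule.sub_mem _ (NN_opTT _ _ hm) (NN_opTT _ _ hm))
    · exact Submodule.zero_mem _

/-- The action of the free algebra on the big module. -/
def freeRep : FA I →ₐ[KK] Module.End KK (VV I W) :=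
  FreeAlgebra.lift KK fun g => match g with
    | QGen.e i => ρ.oE i
    | QGen.f i => opF W i
    | QGen.t i => ρ.oT i
    | QGen.tinv i => ρ.oT' i

theorem freeRep_e (i : I) : ρ.freeRep (ge i) = ρ.oE i := by simp [freeRep, ge]
theorem freeRep_f (i : I) : ρ.freeRep (gf i) = opF W i := by simp [freeRep, gf]
theorem freeRep_t (i : I) : ρ.freeRep (gT i) = ρ.oT i := by simp [freeRep, gT]
theorem freeRep_tinv (i : I) : ρ.freeRep (gTinv i) = ρ.oT' i := by simp [freeRep, gTinv]

theorem freeRep_NN (u : FA I) : NN C W ≤ (NN C W).comap (ρ.freeRep u) := by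
  induction u using FreeAlgebra.induction with
  | grade0 r =>
    intro v hv
    rw [AlgHom.commutes]
    exact Submodule.smul_mem _ _ hv
  | grade1 g =>
    cases g with
    | e i => exact (ρ.freeRep_e i) ▸ ρ.NN_E i
    | f i => exact (ρ.freeRep_f i) ▸ NN_F i
    | t i => exact (ρ.freeRep_t i) ▸ NN_opTT _ _
    | tinv i => exact (ρ.freeRep_tinv i) ▸ NN_opTT _ _
  | mul a b ha hb =>
    intro v hv
    rw [map_mul]
    exact ha (hb hv)
  | add a b ha hb =>
    intro v hv
    rw [map_add]
    exact Submodule.add_mem (NN C W) (ha hv) (hb hv)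

def quotRep : FA I →ₐ[KK] Module.End KK (VV I W ⧸ NN C W) where
  toFun u := (NN C W).mapQ (NN C W) (ρ.freeRep u) (ρ.freeRep_NN u)
  map_one' := by ext; simp
  map_mul' a b := by ext; simp
  map_zero' := by ext; simp
  map_add' a b := by ext; simp
  commutes' r := by
    refine Submodule.linearMap_qext _ (LinearMap.ext fun v => ?_)
    simp only [LinearMap.comp_apply, Submodule.mkQ_apply, Submodule.mapQ_apply, AlgHom.commutes,
      Module.algebraMap_end_apply, Submodule.Quotient.mk_smul]

theorem quotRep_mk (u : FA I) (v : VV I W) :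
    ρ.quotRep u ((NN C W).mkQ v) = (NN C W).mkQ (ρ.freeRep u v) := rfl

theorem quotRep_congr (u v : FA I) (h : ρ.freeRep u = ρ.freeRep v) :
    ρ.quotRep u = ρ.quotRep v := by
  ext x
  have h1 := ρ.quotRep_mk u
  have h2 := ρ.quotRep_mk v
  simp only [LinearMap.comp_apply, h1, h2, h]

theorem serreE_eq (i j : I) : serreE C i j = ser (C.d i) (C.a i j) (ge i) (ge j) := rfl
theorem serreF_eq (i j : I) : serreF C i j = ser (C.d i) (C.a i j) (gf i) (gf j) := rfl

theorem quotRep_rel {u v : FA I} (h : QRel C u v) : ρ.quotRep u = ρ.quotRep v := by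
  cases h with
  | serre_f i j hij =>
    rw [map_zero]
    ext x
    simp only [LinearMap.comp_apply, quotRep_mk, LinearMap.zero_apply]
    rw [serreF_eq, map_ser, freeRep_f, freeRep_f, Submodule.mkQ_apply,
      Submodule.Quotient.mk_eq_zero]
    exact Submodule.subset_span ⟨[], i, j, _, hij, rfl⟩
  | serre_e i j hij =>
    apply quotRep_congr
    rw [serreE_eq, map_ser, freeRep_e, freeRep_e, map_zero, ρ.serE_zero i j hij]
  | t_tinv i => apply quotRep_congr; simp [freeRep_t, freeRep_tinv, oTT']
  | tinv_t i => apply quotRep_congr; simp [freeRep_t, freeRep_tinv, oT'T]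
  | t_t i j => apply quotRep_congr; simp [freeRep_t, ρ.ocomm i j]
  | t_tinv_comm i j => apply quotRep_congr; simp [freeRep_t, freeRep_tinv, ρ.ocomm' i j]
  | t_e i j => apply quotRep_congr; simp [freeRep_t, freeRep_e, ρ.oTE i j]
  | t_f i j => apply quotRep_congr; simp [freeRep_t, freeRep_f, ρ.oT_F i j]
  | e_f i j =>
    apply quotRep_congr
    by_cases h : i = j
    · subst h
      simp [freeRep_t, freeRep_tinv, freeRep_f, freeRep_e, ρ.oE_F]
    · simp [freeRep_f, freeRep_e, ρ.oE_F, h]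

/-- The representation of the quantum group. -/
def rep : Uq C →ₐ[KK] Module.End KK (VV I W ⧸ NN C W) :=
  RingQuot.liftAlgHom KK ⟨ρ.quotRep, fun _ _ h => ρ.quotRep_rel h⟩

theorem rep_mk (u : FA I) (v : VV I W) :
    ρ.rep (uMk C u) ((NN C W).mkQ v) = (NN C W).mkQ (ρ.freeRep u v) := by
  rw [rep, uMk, RingQuot.liftAlgHom_mkAlgHom_apply]
  rfl

end BRep

end Induced


/-! ### Presented algebras -/

inductive SRel {K : Type} (d : K → ℤ) (a : K → K → ℤ) :
    FreeAlgebra KK K → FreeAlgebra KK K → Prop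
  | mk (i j : K) : i ≠ j →
      SRel d a (ser (d i) (a i j) (FreeAlgebra.ι KK i) (FreeAlgebra.ι KK j)) 0

/-- The algebra presented by the Serre relations. -/
def SAlg {K : Type} (d : K → ℤ) (a : K → K → ℤ) : Type := RingQuot (SRel d a)

instance instRingSAlg {K : Type} (d : K → ℤ) (a : K → K → ℤ) : Ring (SAlg d a) :=
  inferInstanceAs (Ring (RingQuot (SRel d a)))

instance instAlgebraSAlg {K : Type} (d : K → ℤ) (a : K → K → ℤ) : Algebra KK (SAlg d a) :=
  inferInstanceAs (Algebra KK (RingQuot (SRel d a)))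

section SAlgSec

variable {K : Type} (d : K → ℤ) (a : K → K → ℤ)

def sMk : FreeAlgebra KK K →ₐ[KK] SAlg d a := RingQuot.mkAlgHom KK (SRel d a)

def sG (k : K) : SAlg d a := sMk d a (FreeAlgebra.ι KK k)

theorem sMk_surj : Function.Surjective (sMk d a) := RingQuot.mkAlgHom_surjective KK _

theorem sG_ser (i j : K) (h : i ≠ j) : ser (d i) (a i j) (sG d a i) (sG d a j) = 0 := by
  have h1 : sMk d a (ser (d i) (a i j) (FreeAlgebra.ι KK i) (FreeAlgebra.ι KK j)) = sMk d a 0 :=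
    RingQuot.mkAlgHom_rel KK (SRel.mk i j h)
  rw [map_ser, map_zero] at h1
  exact h1

variable {R : Type} [Ring R] [Algebra KK R]

def sLift (g : K → R) (h : ∀ i j, i ≠ j → ser (d i) (a i j) (g i) (g j) = 0) :
    SAlg d a →ₐ[KK] R :=
  RingQuot.liftAlgHom KK ⟨FreeAlgebra.lift KK g, by
    rintro _ _ ⟨i, j, hij⟩
    rw [map_ser, map_zero, FreeAlgebra.lift_ι_apply, FreeAlgebra.lift_ι_apply, h i j hij]⟩

theorem sLift_sG (g : K → R) (h : ∀ i j, i ≠ j → ser (d i) (a i j) (g i) (g j) = 0) (k : K) :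
    sLift d a g h (sG d a k) = g k :=
  (RingQuot.liftAlgHom_mkAlgHom_apply KK (FreeAlgebra.lift KK g) _ (FreeAlgebra.ι KK k)).trans
    (FreeAlgebra.lift_ι_apply g k)

end SAlgSec

section ZAlgSec

variable (I)

def zgT (i : I) : FreeAlgebra KK (I ⊕ I) := FreeAlgebra.ι KK (Sum.inl i)
def zgT' (i : I) : FreeAlgebra KK (I ⊕ I) := FreeAlgebra.ι KK (Sum.inr i)

inductive ZRel : FreeAlgebra KK (I ⊕ I) → FreeAlgebra KK (I ⊕ I) → Prop
  | t_tinv (i : I) : ZRel (zgT I i * zgT' I i) 1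
  | tinv_t (i : I) : ZRel (zgT' I i * zgT I i) 1
  | t_t (i j : I) : ZRel (zgT I i * zgT I j) (zgT I j * zgT I i)
  | t_tinv_comm (i j : I) : ZRel (zgT I i * zgT' I j) (zgT' I j * zgT I i)

/-- The torus part. -/
def ZAlg : Type := RingQuot (ZRel I)

instance instRingZAlg : Ring (ZAlg I) := inferInstanceAs (Ring (RingQuot (ZRel I)))

instance instAlgebraZAlg : Algebra KK (ZAlg I) :=
  inferInstanceAs (Algebra KK (RingQuot (ZRel I)))

def zMk : FreeAlgebra KK (I ⊕ I) →ₐ[KK] ZAlg I := RingQuot.mkAlgHom KK (ZRel I)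

theorem zMk_surj : Function.Surjective (zMk I) := RingQuot.mkAlgHom_surjective KK _

def zT (i : I) : ZAlg I := zMk I (zgT I i)
def zT' (i : I) : ZAlg I := zMk I (zgT' I i)

theorem zTT' (i : I) : zT I i * zT' I i = 1 := by
  rw [zT, zT', ← map_mul, ← map_one (zMk I)]
  exact RingQuot.mkAlgHom_rel KK (ZRel.t_tinv i)

theorem zT'T (i : I) : zT' I i * zT I i = 1 := by
  rw [zT, zT', ← map_mul, ← map_one (zMk I)]
  exact RingQuot.mkAlgHom_rel KK (ZRel.tinv_t i)

theorem zcomm (i j : I) : zT I i * zT I j = zT I j * zT I i := by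
  rw [zT, zT, ← map_mul, ← map_mul]
  exact RingQuot.mkAlgHom_rel KK (ZRel.t_t i j)

theorem zcomm' (i j : I) : zT I i * zT' I j = zT' I j * zT I i := by
  rw [zT, zT', ← map_mul, ← map_mul]
  exact RingQuot.mkAlgHom_rel KK (ZRel.t_tinv_comm i j)

variable {I}
variable {R : Type} [Ring R] [Algebra KK R]

def zLift (g g' : I → R) (h1 : ∀ i, g i * g' i = 1) (h2 : ∀ i, g' i * g i = 1)
    (h3 : ∀ i j, g i * g j = g j * g i) (h4 : ∀ i j, g i * g' j = g' j * g i) :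
    ZAlg I →ₐ[KK] R :=
  RingQuot.liftAlgHom KK ⟨FreeAlgebra.lift KK (Sum.elim g g'), by
    intro x y h
    cases h with
    | t_tinv i => simp [zgT, zgT', h1]
    | tinv_t i => simp [zgT, zgT', h2]
    | t_t i j => simp [zgT, h3 i j]
    | t_tinv_comm i j => simp [zgT, zgT', h4 i j]⟩

variable (g g' : I → R) (h1 : ∀ i, g i * g' i = 1) (h2 : ∀ i, g' i * g i = 1)
    (h3 : ∀ i j, g i * g j = g j * g i) (h4 : ∀ i j, g i * g' j = g' j * g i)

theorem zLift_T (i : I) : zLift g g' h1 h2 h3 h4 (zT I i) = g i :=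
  (RingQuot.liftAlgHom_mkAlgHom_apply KK (FreeAlgebra.lift KK (Sum.elim g g')) _
    (FreeAlgebra.ι KK (Sum.inl i))).trans (FreeAlgebra.lift_ι_apply (Sum.elim g g') (Sum.inl i))

theorem zLift_T' (i : I) : zLift g g' h1 h2 h3 h4 (zT' I i) = g' i :=
  (RingQuot.liftAlgHom_mkAlgHom_apply KK (FreeAlgebra.lift KK (Sum.elim g g')) _
    (FreeAlgebra.ι KK (Sum.inr i))).trans (FreeAlgebra.lift_ι_apply (Sum.elim g g') (Sum.inr i))

end ZAlgSec

theorem inter {X A V V' : Type} [Ring A] [Algebra KK A] [AddCommGroup V] [Module KK V]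
    [AddCommGroup V'] [Module KK V'] (g : FreeAlgebra KK X →ₐ[KK] A)
    (hg : Function.Surjective g) (α : A →ₐ[KK] Module.End KK V) (β : A →ₐ[KK] Module.End KK V')
    (p : V →ₗ[KK] V')
    (h : ∀ x v, p (α (g (FreeAlgebra.ι KK x)) v) = β (g (FreeAlgebra.ι KK x)) (p v)) :
    ∀ a v, p (α a v) = β a (p v) := by
  intro a
  obtain ⟨u, rfl⟩ := hg a
  induction u using FreeAlgebra.induction with
  | grade0 r => intro v; simp only [AlgHom.commutes, Module.algebraMap_end_apply, map_smul]
  | grade1 x => exact h x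
  | mul a b ha hb => intro v; simp only [map_mul, Module.End.mul_apply, ha, hb]
  | add a b ha hb => intro v; simp only [map_add, LinearMap.add_apply, ha, hb]

/-! ### The Borel module -/

section Borel

variable (C : CartanData I) (J : Set I)

abbrev Aneg : Type := SAlg C.d C.a
abbrev Apos : Type := SAlg (fun j : J => C.d j) (fun i j : J => C.a i j)
abbrev BW : Type := ZAlg I ⊗[KK] Apos C J

open Classical in
def eh (i : I) : Apos C J :=
  if h : i ∈ J then sG (fun j : J => C.d j) (fun i j : J => C.a i j) ⟨i, h⟩ else 0

theorem ser_zero_left {R : Type} [Ring R] [Algebra KK R] (d a : ℤ) (ha : a ≤ 0) (y : R) :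
    ser d a 0 y = 0 := by
  unfold ser dpw
  refine Finset.sum_eq_zero fun s hs => ?_
  by_cases h : s = 0
  · subst h
    have : (1 - a).toNat - 0 ≠ 0 := by omega
    rw [zero_pow this]; simp
  · rw [zero_pow h]; simp

theorem ser_zero_right {R : Type} [Ring R] [Algebra KK R] (d a : ℤ) (x : R) :
    ser d a x 0 = 0 := by
  simp [ser]

theorem eh_ser (i j : I) (hij : i ≠ j) : ser (C.d i) (C.a i j) (eh C J i) (eh C J j) = 0 := by
  by_cases hi : i ∈ J
  · by_cases hj : j ∈ J
    · rw [eh, eh, dif_pos hi, dif_pos hj]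
      exact sG_ser (fun j : J => C.d j) (fun i j : J => C.a i j) ⟨i, hi⟩ ⟨j, hj⟩
        (fun h => hij (congrArg Subtype.val h))
    · have : eh C J j = 0 := by rw [eh, dif_neg hj]
      rw [this, ser_zero_right]
  · have : eh C J i = 0 := by rw [eh, dif_neg hi]
    rw [this, ser_zero_left _ _ (C.a_offdiag i j hij)]

def zsig (j : I) : ZAlg I →ₐ[KK] ZAlg I :=
  zLift (fun i => qpow (-(C.d i * C.a i j)) • zT I i) (fun i => qpow (C.d i * C.a i j) • zT' I i)
    (fun i => by
      rw [smul_mul_assoc, mul_smul_comm, smul_smul, ← qpow_add, neg_add_cancel, qpow_zero, one_smul,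
        zTT'])
    (fun i => by
      rw [smul_mul_assoc, mul_smul_comm, smul_smul, ← qpow_add, add_neg_cancel, qpow_zero, one_smul,
        zT'T])
    (fun i k => by
      rw [smul_mul_assoc, mul_smul_comm, smul_mul_assoc, mul_smul_comm, zcomm, smul_comm])
    (fun i k => by
      rw [smul_mul_assoc, mul_smul_comm, smul_mul_assoc, mul_smul_comm, zcomm', smul_comm])

theorem zsig_T (i j : I) : zsig C j (zT I i) = qpow (-(C.d i * C.a i j)) • zT I i := zLift_T ..
theorem zsig_T' (i j : I) : zsig C j (zT' I i) = qpow (C.d i * C.a i j) • zT' I i := zLift_T' ..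

theorem zsig_comm (i j : I) (z : ZAlg I) : zsig C i (zsig C j z) = zsig C j (zsig C i z) := by
  have h : ((zsig C i).comp (zsig C j)).comp (zMk I) =
      ((zsig C j).comp (zsig C i)).comp (zMk I) := by
    apply FreeAlgebra.hom_ext
    funext x
    cases x with
    | inl k =>
      have : (zMk I) (FreeAlgebra.ι KK (Sum.inl k)) = zT I k := rfl
      simp only [Function.comp_apply, AlgHom.comp_apply, this, zsig_T, map_smul]
      rw [smul_comm]
    | inr k =>
      have : (zMk I) (FreeAlgebra.ι KK (Sum.inr k)) = zT' I k := rfl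
      simp only [Function.comp_apply, AlgHom.comp_apply, this, zsig_T', map_smul]
      rw [smul_comm]
  obtain ⟨u, rfl⟩ := zMk_surj I z
  exact AlgHom.congr_fun h u

def zR : Module.End KK (ZAlg I) →ₐ[KK] Module.End KK (BW C J) :=
  Module.End.rTensorAlgHom KK (ZAlg I) (Apos C J)
def eR : Module.End KK (Apos C J) →ₐ[KK] Module.End KK (BW C J) :=
  Module.End.lTensorAlgHom KK (Apos C J) (ZAlg I)

theorem zR_tmul (f : Module.End KK (ZAlg I)) (z : ZAlg I) (x : Apos C J) :
    zR C J f (z ⊗ₜ x) = f z ⊗ₜ x := rfl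
theorem eR_tmul (f : Module.End KK (Apos C J)) (z : ZAlg I) (x : Apos C J) :
    eR C J f (z ⊗ₜ x) = z ⊗ₜ f x := rfl

theorem zR_eR (f : Module.End KK (ZAlg I)) (g : Module.End KK (Apos C J)) :
    Commute (zR C J f) (eR C J g) := by
  refine TensorProduct.ext' fun z x => ?_
  simp only [Module.End.mul_apply, zR_tmul, eR_tmul]

def zL : ZAlg I →ₐ[KK] Module.End KK (BW C J) := (zR C J).comp (Algebra.lmul KK (ZAlg I))
def eL : Apos C J →ₐ[KK] Module.End KK (BW C J) := (eR C J).comp (Algebra.lmul KK (Apos C J))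

theorem zL_tmul (f : ZAlg I) (z : ZAlg I) (x : Apos C J) :
    zL C J f (z ⊗ₜ x) = (f * z) ⊗ₜ x := rfl
theorem eL_tmul (f : Apos C J) (z : ZAlg I) (x : Apos C J) :
    eL C J f (z ⊗ₜ x) = z ⊗ₜ (f * x) := rfl

def borelRep : BRep C (BW C J) where
  T i := zL C J (zT I i)
  T' i := zL C J (zT' I i)
  E i := zR C J (zsig C i).toLinearMap * eL C J (eh C J i)
  TT' i := by rw [← map_mul, zTT', map_one]
  T'T i := by rw [← map_mul, zT'T, map_one]
  comm i j := by rw [← map_mul, zcomm, map_mul]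
  comm' i j := by rw [← map_mul, zcomm', map_mul]
  TE i j := by
    refine TensorProduct.ext' fun z x => ?_
    simp only [Module.End.mul_apply, LinearMap.smul_apply, zR_tmul, eL_tmul, zL_tmul,
      AlgHom.toLinearMap_apply, map_mul, zsig_T]
    rw [smul_mul_assoc, TensorProduct.smul_tmul', smul_smul, ← qpow_add, add_neg_cancel, qpow_zero,
      one_smul]
  serre i j hij := by
    rw [ser_factor]
    · rw [← map_ser, eh_ser C J i j hij, map_zero, mul_zero]
    · rw [commute_iff_eq, ← map_mul, ← map_mul]
      congr 1
      refine LinearMap.ext fun z => ?_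
      exact zsig_comm C i j z
    · exact zR_eR C J _ _
    · exact zR_eR C J _ _
    · exact zR_eR C J _ _

/-- Left action of the negative part on the target. -/
def nL : Aneg C →ₐ[KK] Module.End KK (Aneg C ⊗[KK] BW C J) :=
  (Module.End.rTensorAlgHom KK (Aneg C) (BW C J)).comp (Algebra.lmul KK (Aneg C))

theorem nL_tmul (f : Aneg C) (z : Aneg C) (x : BW C J) :
    nL C J f (z ⊗ₜ x) = (f * z) ⊗ₜ x := rfl

def piV : VV I (BW C J) →ₗ[KK] Aneg C ⊗[KK] BW C J :=
  Finsupp.lsum KK fun w => TensorProduct.mk KK (Aneg C) (BW C J) ((w.map (sG C.d C.a)).prod)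

theorem piV_single (w : List I) (x : BW C J) :
    piV C J (Finsupp.single w x) = (w.map (sG C.d C.a)).prod ⊗ₜ x := by
  simp [piV]

theorem piV_F (k : I) (v : VV I (BW C J)) :
    piV C J (opF _ k v) = nL C J (sG C.d C.a k) (piV C J v) := by
  have : piV C J ∘ₗ opF _ k = nL C J (sG C.d C.a k) ∘ₗ piV C J := by
    refine Finsupp.lhom_ext fun w x => ?_
    simp only [LinearMap.comp_apply, opF_single, piV_single, List.map_cons, List.prod_cons, nL_tmul]
  exact LinearMap.congr_fun this v

theorem piV_free (u : FreeAlgebra KK I) (v : VV I (BW C J)) :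
    piV C J (FreeAlgebra.lift KK (opF (BW C J)) u v) = nL C J (sMk C.d C.a u) (piV C J v) := by
  refine inter (AlgHom.id KK _) Function.surjective_id (FreeAlgebra.lift KK (opF (BW C J)))
    ((nL C J).comp (sMk C.d C.a)) (piV C J) (fun x v => ?_) u v
  simp only [AlgHom.id_apply, FreeAlgebra.lift_ι_apply]
  exact piV_F C J x v

theorem piV_NN : BRep.NN C (BW C J) ≤ LinearMap.ker (piV C J) := by
  refine Submodule.span_le.mpr ?_
  rintro v ⟨w, i, j, y, hij, rfl⟩
  simp only [SetLike.mem_coe, LinearMap.mem_ker]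
  induction w with
  | nil =>
    simp only [List.map_nil, List.prod_nil, Module.End.one_apply]
    have h := piV_free C J
      (ser (C.d i) (C.a i j) (FreeAlgebra.ι KK i) (FreeAlgebra.ι KK j)) y
    rw [map_ser, FreeAlgebra.lift_ι_apply, FreeAlgebra.lift_ι_apply, map_ser] at h
    rw [h]
    have h0 := sG_ser C.d C.a i j hij
    unfold sG at h0
    rw [h0, map_zero, LinearMap.zero_apply]
  | cons k w ih =>
    simp only [List.map_cons, List.prod_cons, Module.End.mul_apply]
    rw [piV_F, ih, map_zero]

def piQ : (VV I (BW C J) ⧸ BRep.NN C (BW C J)) →ₗ[KK] Aneg C ⊗[KK] BW C J :=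
  (BRep.NN C (BW C J)).liftQ (piV C J) (piV_NN C J)

theorem piQ_mk (v : VV I (BW C J)) : piQ C J ((BRep.NN C (BW C J)).mkQ v) = piV C J v := rfl

def v0 (x : BW C J) : VV I (BW C J) ⧸ BRep.NN C (BW C J) :=
  (BRep.NN C (BW C J)).mkQ (Finsupp.single [] x)

/-- The map detecting linear independence. -/
def Psi : Uq C →ₗ[KK] Aneg C ⊗[KK] BW C J where
  toFun u := piQ C J ((borelRep C J).rep u (v0 C J (1 ⊗ₜ 1)))
  map_add' a b := by simp
  map_smul' r a := by simp

theorem Psi_apply (u : Uq C) : Psi C J u = piQ C J ((borelRep C J).rep u (v0 C J (1 ⊗ₜ 1))) := rfl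

theorem rep_neg (g : Aneg C →ₐ[KK] Uq C) (hg : ∀ i, g (sG C.d C.a i) = uF C i) (y : Aneg C)
    (v : VV I (BW C J) ⧸ BRep.NN C (BW C J)) :
    piQ C J ((borelRep C J).rep (g y) v) = nL C J y (piQ C J v) := by
  refine inter (sMk C.d C.a) (sMk_surj _ _) ((borelRep C J).rep.comp g) (nL C J) (piQ C J)
    (fun i v => ?_) y v
  obtain ⟨v, rfl⟩ := Submodule.mkQ_surjective _ v
  have := hg i
  rw [sG] at this
  rw [AlgHom.comp_apply, this, uF, BRep.rep_mk, piQ_mk, piQ_mk, BRep.freeRep_f, piV_F]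
  rfl

theorem rep_zero (g : ZAlg I →ₐ[KK] Uq C) (hg : ∀ i, g (zT I i) = uT C i)
    (hg' : ∀ i, g (zT' I i) = uTinv C i) (y : ZAlg I) (x : BW C J) :
    (borelRep C J).rep (g y) (v0 C J x) = v0 C J (zL C J y x) := by
  symm
  refine inter (zMk I) (zMk_surj I) (zL C J) ((borelRep C J).rep.comp g)
    ((BRep.NN C (BW C J)).mkQ ∘ₗ Finsupp.lsingle []) (fun i x => ?_) y x
  simp only [LinearMap.comp_apply, AlgHom.comp_apply, Finsupp.lsingle_apply]
  cases i with
  | inl i =>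
    have : zMk I (FreeAlgebra.ι KK (Sum.inl i)) = zT I i := rfl
    rw [this, hg, uT, BRep.rep_mk, BRep.freeRep_t, BRep.oT_nil]
    rfl
  | inr i =>
    have : zMk I (FreeAlgebra.ι KK (Sum.inr i)) = zT' I i := rfl
    rw [this, hg', uTinv, BRep.rep_mk, BRep.freeRep_tinv, BRep.oT'_nil]
    rfl

abbrev eG (j : J) : Apos C J := sG (fun j : J => C.d j) (fun i j : J => C.a i j) j

theorem rep_pos (g : Apos C J →ₐ[KK] Uq C) (hg : ∀ j : J, g (eG C J j) = uE C j)
    (y x : Apos C J) :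
    (borelRep C J).rep (g y) (v0 C J (1 ⊗ₜ x)) = v0 C J (1 ⊗ₜ (y * x)) := by
  symm
  refine inter (sMk (fun j : J => C.d j) (fun i j : J => C.a i j)) (sMk_surj _ _)
    (Algebra.lmul KK (Apos C J)) ((borelRep C J).rep.comp g)
    ((BRep.NN C (BW C J)).mkQ ∘ₗ Finsupp.lsingle [] ∘ₗ TensorProduct.mk KK (ZAlg I) (Apos C J) 1)
    (fun i x => ?_) y x
  simp only [LinearMap.comp_apply, AlgHom.comp_apply, Finsupp.lsingle_apply]
  have h := hg i
  rw [eG, sG] at h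
  rw [h, uE, BRep.rep_mk, BRep.freeRep_e, BRep.oE_nil]
  congr 2
  have h2 : eh C J i = eG C J i := by rw [eh, dif_pos i.2]
  simp only [borelRep, Module.End.mul_apply, TensorProduct.mk_apply, eL_tmul, zR_tmul, h2]
  simp [eG, sG]

end Borel


/-! ### The parabolic algebra -/

section Para

variable (C : CartanData I) (J : Set I)

theorem u_e_f (i j : I) : uE C i * uF C j - uF C j * uE C i =
    if i = j then (qpow (C.d i) - qpow (-C.d i))⁻¹ • (uT C i - uTinv C i) else 0 := by
  have h : uMk C _ = uMk C _ := RingQuot.mkAlgHom_rel KK (QRel.e_f (C := C) i j)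
  rw [map_sub, map_mul, map_mul] at h
  refine h.trans ?_
  split_ifs
  · rw [map_smul, map_sub]; rfl
  · exact map_zero _

theorem u_serre_e (i j : I) (hij : i ≠ j) :
    ser (C.d i) (C.a i j) (uE C i) (uE C j) = 0 := by
  have h : uMk C (ser (C.d i) (C.a i j) (ge i) (ge j)) = uMk C 0 :=
    RingQuot.mkAlgHom_rel KK (QRel.serre_e (C := C) i j hij)
  rw [map_ser, map_zero] at h
  exact h

theorem u_serre_f (i j : I) (hij : i ≠ j) :
    ser (C.d i) (C.a i j) (uF C i) (uF C j) = 0 := by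
  have h : uMk C (ser (C.d i) (C.a i j) (gf i) (gf j)) = uMk C 0 :=
    RingQuot.mkAlgHom_rel KK (QRel.serre_f (C := C) i j hij)
  rw [map_ser, map_zero] at h
  exact h

theorem u_rel {x y : FA I} (h : QRel C x y) : uMk C x = uMk C y := RingQuot.mkAlgHom_rel KK h

theorem p_rel {x y : FAP I J} (h : QRelP C J x y) : pMk C J x = pMk C J y :=
  RingQuot.mkAlgHom_rel KK h

def phiGen : QGenP I J → Uq C
  | .e j => uE C j
  | .f i => uF C i
  | .t i => uT C i
  | .tinv i => uTinv C i

def phiF : FAP I J →ₐ[KK] Uq C := FreeAlgebra.lift KK (phiGen C J)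

theorem phiF_e (j : J) : phiF C J (pge J j) = uE C j := FreeAlgebra.lift_ι_apply _ _
theorem phiF_f (j : I) : phiF C J (pgf J j) = uF C j := FreeAlgebra.lift_ι_apply _ _
theorem phiF_t (j : I) : phiF C J (pgT J j) = uT C j := FreeAlgebra.lift_ι_apply _ _
theorem phiF_tinv (j : I) : phiF C J (pgTinv J j) = uTinv C j := FreeAlgebra.lift_ι_apply _ _

theorem phiF_rel {x y : FAP I J} (h : QRelP C J x y) : phiF C J x = phiF C J y := by
  cases h with
  | t_tinv i =>
    rw [map_mul, map_one, phiF_t, phiF_tinv, uT, uTinv, ← map_mul, u_rel C (QRel.t_tinv i), map_one]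
  | tinv_t i =>
    rw [map_mul, map_one, phiF_t, phiF_tinv, uT, uTinv, ← map_mul, u_rel C (QRel.tinv_t i), map_one]
  | t_t i j =>
    rw [map_mul, map_mul, phiF_t, phiF_t, uT, uT, ← map_mul, u_rel C (QRel.t_t i j), map_mul]
  | t_tinv_comm i j =>
    rw [map_mul, map_mul, phiF_t, phiF_tinv, uT, uTinv, ← map_mul,
      u_rel C (QRel.t_tinv_comm i j), map_mul]
  | t_e i j =>
    rw [map_smul, map_mul, map_mul, phiF_t, phiF_e, uT, uE, ← map_mul,
      u_rel C (QRel.t_e i j), map_smul, map_mul]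
  | t_f i j =>
    rw [map_smul, map_mul, map_mul, phiF_t, phiF_f, uT, uF, ← map_mul,
      u_rel C (QRel.t_f i j), map_smul, map_mul]
  | e_f i j =>
    rw [map_sub, map_mul, map_mul, phiF_e, phiF_f, u_e_f]
    split_ifs
    · rw [map_smul, map_sub, phiF_t, phiF_tinv]
    · rw [map_zero]
  | serre_e i j hij =>
    have h : phiF C J (ser (C.d i) (C.a i j) (pge J i) (pge J j)) = 0 := by
      rw [map_ser, phiF_e, phiF_e, u_serre_e C i j hij]
    rw [map_zero]
    exact h
  | serre_f i j hij =>
    have h : phiF C J (ser (C.d i) (C.a i j) (pgf J i) (pgf J j)) = 0 := by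
      rw [map_ser, phiF_f, phiF_f, u_serre_f C i j hij]
    rw [map_zero]
    exact h

def phi : UqP C J →ₐ[KK] Uq C := RingQuot.liftAlgHom KK ⟨phiF C J, fun _ _ h => phiF_rel C J h⟩

theorem phi_mk (u : FAP I J) : phi C J (pMk C J u) = phiF C J u :=
  RingQuot.liftAlgHom_mkAlgHom_apply KK (phiF C J) _ u

theorem phi_e (j : J) : phi C J (pE C J j) = uE C j := (phi_mk C J _).trans (phiF_e C J j)
theorem phi_f (j : I) : phi C J (pF C J j) = uF C j := (phi_mk C J _).trans (phiF_f C J j)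
theorem phi_t (j : I) : phi C J (pT C J j) = uT C j := (phi_mk C J _).trans (phiF_t C J j)
theorem phi_tinv (j : I) : phi C J (pTinv C J j) = uTinv C j :=
  (phi_mk C J _).trans (phiF_tinv C J j)

/-! relations in the parabolic algebra -/

theorem p_t_tinv (i : I) : pT C J i * pTinv C J i = 1 := by
  rw [pT, pTinv, ← map_mul, p_rel C J (QRelP.t_tinv i), map_one]
theorem p_tinv_t (i : I) : pTinv C J i * pT C J i = 1 := by
  rw [pT, pTinv, ← map_mul, p_rel C J (QRelP.tinv_t i), map_one]
theorem p_t_t (i j : I) : pT C J i * pT C J j = pT C J j * pT C J i := by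
  rw [pT, pT, ← map_mul, p_rel C J (QRelP.t_t i j), map_mul]
theorem p_t_tinv_comm (i j : I) : pT C J i * pTinv C J j = pTinv C J j * pT C J i := by
  rw [pT, pTinv, ← map_mul, p_rel C J (QRelP.t_tinv_comm i j), map_mul]
theorem p_t_e (i : I) (j : J) :
    pT C J i * pE C J j = qpow (C.d i * C.a i j) • (pE C J j * pT C J i) := by
  rw [pT, pE, ← map_mul, p_rel C J (QRelP.t_e i j), map_smul, map_mul]
theorem p_t_f (i j : I) :
    pT C J i * pF C J j = qpow (-(C.d i * C.a i j)) • (pF C J j * pT C J i) := by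
  rw [pT, pF, ← map_mul, p_rel C J (QRelP.t_f i j), map_smul, map_mul]
theorem p_tinv_e (i : I) (j : J) :
    pTinv C J i * pE C J j = (qpow (C.d i * C.a i j))⁻¹ • (pE C J j * pTinv C J i) :=
  tinv_rel _ _ _ _ (qpow_ne_zero _) (p_t_tinv C J i) (p_tinv_t C J i) (p_t_e C J i j)
theorem p_tinv_f (i j : I) :
    pTinv C J i * pF C J j = (qpow (-(C.d i * C.a i j)))⁻¹ • (pF C J j * pTinv C J i) :=
  tinv_rel _ _ _ _ (qpow_ne_zero _) (p_t_tinv C J i) (p_tinv_t C J i) (p_t_f C J i j)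

theorem p_e_f (i : J) (j : I) : ∃ c : KK, pE C J i * pF C J j =
    pF C J j * pE C J i + c • (pT C J i - pTinv C J i) := by
  have h := p_rel C J (QRelP.e_f (C := C) i j)
  rw [map_sub, map_mul, map_mul] at h
  split_ifs at h
  · rw [map_smul, map_sub] at h
    exact ⟨_, sub_eq_iff_eq_add'.mp h⟩
  · rw [map_zero] at h
    refine ⟨0, ?_⟩
    rw [zero_smul, add_zero]
    exact sub_eq_zero.mp h

theorem p_serre_e (i j : J) (hij : i ≠ j) :
    ser (C.d i) (C.a i j) (pE C J i) (pE C J j) = 0 := by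
  have h : pMk C J (ser (C.d i) (C.a i j) (pge J i) (pge J j)) = pMk C J 0 :=
    RingQuot.mkAlgHom_rel KK (QRelP.serre_e (C := C) i j (fun h => hij (Subtype.ext h)))
  rw [map_ser, map_zero] at h
  exact h

theorem p_serre_f (i j : I) (hij : i ≠ j) :
    ser (C.d i) (C.a i j) (pF C J i) (pF C J j) = 0 := by
  have h : pMk C J (ser (C.d i) (C.a i j) (pgf J i) (pgf J j)) = pMk C J 0 :=
    RingQuot.mkAlgHom_rel KK (QRelP.serre_f (C := C) i j hij)
  rw [map_ser, map_zero] at h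
  exact h

/-! elements of the subalgebras -/

def sF (i : I) : ↥(Pneg C J) := ⟨pF C J i, Algebra.subset_adjoin ⟨i, rfl⟩⟩
def sE (i : J) : ↥(Ppos C J) := ⟨pE C J i, Algebra.subset_adjoin ⟨i, rfl⟩⟩
def sT (i : I) : ↥(Pzero C J) := ⟨pT C J i, Algebra.subset_adjoin (Or.inl ⟨i, rfl⟩)⟩
def sT' (i : I) : ↥(Pzero C J) := ⟨pTinv C J i, Algebra.subset_adjoin (Or.inr ⟨i, rfl⟩)⟩

def nMap : Aneg C →ₐ[KK] ↥(Pneg C J) := sLift C.d C.a (sF C J) fun i j hij => by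
  apply Subtype.val_injective
  have := map_ser (Pneg C J).val (C.d i) (C.a i j) (sF C J i) (sF C J j)
  exact this.trans (p_serre_f C J i j hij)

def eMap : Apos C J →ₐ[KK] ↥(Ppos C J) :=
  sLift (fun j : J => C.d j) (fun i j : J => C.a i j) (sE C J) fun i j hij => by
    apply Subtype.val_injective
    have := map_ser (Ppos C J).val (C.d i) (C.a i j) (sE C J i) (sE C J j)
    exact this.trans (p_serre_e C J i j hij)

def zMap : ZAlg I →ₐ[KK] ↥(Pzero C J) :=
  zLift (sT C J) (sT' C J) (fun i => Subtype.ext (p_t_tinv C J i))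
    (fun i => Subtype.ext (p_tinv_t C J i)) (fun i j => Subtype.ext (p_t_t C J i j))
    (fun i j => Subtype.ext (p_t_tinv_comm C J i j))

theorem surj_of_gen {R A : Type} [Ring R] [Algebra KK R] [Ring A] [Algebra KK A] (S : Set R)
    (P : Subalgebra KK R) (hP : P ≤ Algebra.adjoin KK S) (g : A →ₐ[KK] ↥P)
    (h : ∀ s ∈ S, ∃ a, (g a : R) = s) : Function.Surjective g := by
  rintro ⟨x, hx⟩
  have : P ≤ (P.val.comp g).range := by
    refine hP.trans (Algebra.adjoin_le ?_)
    intro s hs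
    obtain ⟨a, ha⟩ := h s hs
    exact ⟨a, ha⟩
  obtain ⟨a, ha⟩ := this hx
  exact ⟨a, Subtype.ext ha⟩

theorem nMap_F (i : I) : nMap C J (sG C.d C.a i) = sF C J i := sLift_sG ..
theorem eMap_E (i : J) : eMap C J (eG C J i) = sE C J i := sLift_sG ..
theorem zMap_T (i : I) : zMap C J (zT I i) = sT C J i := zLift_T ..
theorem zMap_T' (i : I) : zMap C J (zT' I i) = sT' C J i := zLift_T' ..

theorem nMap_surj : Function.Surjective (nMap C J) := by
  refine surj_of_gen _ _ le_rfl _ ?_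
  rintro _ ⟨i, rfl⟩
  exact ⟨sG C.d C.a i, congrArg Subtype.val (nMap_F C J i)⟩

theorem eMap_surj : Function.Surjective (eMap C J) := by
  refine surj_of_gen _ _ le_rfl _ ?_
  rintro _ ⟨i, rfl⟩
  exact ⟨eG C J i, congrArg Subtype.val (eMap_E C J i)⟩

theorem zMap_surj : Function.Surjective (zMap C J) := by
  refine surj_of_gen _ _ le_rfl _ ?_
  rintro _ (⟨i, rfl⟩ | ⟨i, rfl⟩)
  · exact ⟨zT I i, congrArg Subtype.val (zMap_T C J i)⟩
  · exact ⟨zT' I i, congrArg Subtype.val (zMap_T' C J i)⟩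

def sMap : (Aneg C ⊗[KK] ZAlg I) ⊗[KK] Apos C J →ₗ[KK]
    (↥(Pneg C J) ⊗[KK] ↥(Pzero C J)) ⊗[KK] ↥(Ppos C J) :=
  TensorProduct.map (TensorProduct.map (nMap C J).toLinearMap (zMap C J).toLinearMap)
    (eMap C J).toLinearMap

theorem sMap_surj : Function.Surjective (sMap C J) :=
  TensorProduct.map_surjective
    (TensorProduct.map_surjective (nMap_surj C J) (zMap_surj C J)) (eMap_surj C J)

theorem triMul_tmul (y : ↥(Pneg C J)) (t : ↥(Pzero C J)) (x : ↥(Ppos C J)) :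
    triMul C J ((y ⊗ₜ t) ⊗ₜ x) = (y : UqP C J) * t * x := rfl

theorem Psi_key (y : Aneg C) (t : ZAlg I) (x : Apos C J) :
    Psi C J (phi C J (triMul C J (sMap C J ((y ⊗ₜ t) ⊗ₜ x)))) = y ⊗ₜ (t ⊗ₜ x) := by
  have h1 : sMap C J ((y ⊗ₜ t) ⊗ₜ x) = (nMap C J y ⊗ₜ zMap C J t) ⊗ₜ eMap C J x := rfl
  rw [h1, triMul_tmul, Psi_apply, map_mul, map_mul, map_mul, map_mul, Module.End.mul_apply,
    Module.End.mul_apply]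
  have e1 := rep_pos C J ((phi C J).comp ((Ppos C J).val.comp (eMap C J)))
    (fun j => by
      rw [AlgHom.comp_apply, AlgHom.comp_apply, eMap_E]; exact phi_e C J j) x 1
  have e2 := rep_zero C J ((phi C J).comp ((Pzero C J).val.comp (zMap C J)))
    (fun j => by
      rw [AlgHom.comp_apply, AlgHom.comp_apply, zMap_T]; exact phi_t C J j)
    (fun j => by
      rw [AlgHom.comp_apply, AlgHom.comp_apply, zMap_T']; exact phi_tinv C J j) t (1 ⊗ₜ (x * 1))
  have e3 := rep_neg C J ((phi C J).comp ((Pneg C J).val.comp (nMap C J)))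
    (fun j => by
      rw [AlgHom.comp_apply, AlgHom.comp_apply, nMap_F]; exact phi_f C J j) y
    (v0 C J (zL C J t (1 ⊗ₜ (x * 1))))
  simp only [AlgHom.comp_apply, Subalgebra.coe_val] at e1 e2 e3
  rw [e1, e2, e3, v0, piQ_mk, piV_single, zL_tmul, List.map_nil, List.prod_nil, nL_tmul, mul_one,
    mul_one, mul_one]

theorem Psi_key' (v : (Aneg C ⊗[KK] ZAlg I) ⊗[KK] Apos C J) :
    Psi C J (phi C J (triMul C J (sMap C J v))) = TensorProduct.assoc KK _ _ _ v := by
  have : Psi C J ∘ₗ (phi C J).toLinearMap ∘ₗ triMul C J ∘ₗ sMap C J =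
      (TensorProduct.assoc KK (Aneg C) (ZAlg I) (Apos C J)).toLinearMap := by
    refine TensorProduct.ext_threefold fun y t x => ?_
    exact Psi_key C J y t x
  exact LinearMap.congr_fun this v

theorem phi_triMul_inj : Function.Injective fun v => phi C J (triMul C J v) := by
  intro v w h
  obtain ⟨v, rfl⟩ := sMap_surj C J v
  obtain ⟨w, rfl⟩ := sMap_surj C J w
  have h' : Psi C J (phi C J (triMul C J (sMap C J v))) =
    Psi C J (phi C J (triMul C J (sMap C J w))) := congrArg _ h
  rw [Psi_key', Psi_key'] at h'
  rw [(TensorProduct.assoc KK _ _ _).injective h']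

/-! ### Spanning -/

def spn : Submodule KK (UqP C J) := Submodule.span KK
  {u | ∃ (w : List I) (t : UqP C J) (x : UqP C J), t ∈ Pzero C J ∧ x ∈ Ppos C J ∧
    u = (w.map (pF C J)).prod * t * x}

theorem spn_mem (w : List I) (t x : UqP C J) (ht : t ∈ Pzero C J) (hx : x ∈ Ppos C J) :
    (w.map (pF C J)).prod * t * x ∈ spn C J := Submodule.subset_span ⟨w, t, x, ht, hx, rfl⟩

/-- It suffices to check stability on spanning elements. -/
theorem spn_stable (g : UqP C J)
    (h : ∀ (w : List I) (t x : UqP C J), t ∈ Pzero C J → x ∈ Ppos C J →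
      g * ((w.map (pF C J)).prod * t * x) ∈ spn C J) :
    ∀ v ∈ spn C J, g * v ∈ spn C J := by
  intro v hv
  induction hv using Submodule.span_induction with
  | mem v hv =>
    obtain ⟨w, t, x, ht, hx, rfl⟩ := hv
    exact h w t x ht hx
  | zero => rw [mul_zero]; exact Submodule.zero_mem _
  | add a b _ _ ha hb => rw [mul_add]; exact Submodule.add_mem _ ha hb
  | smul r a _ ha => rw [mul_smul_comm]; exact Submodule.smul_mem _ r ha

theorem spn_F (i : I) : ∀ v ∈ spn C J, pF C J i * v ∈ spn C J := by
  refine spn_stable C J _ fun w t x ht hx => ?_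
  have h := spn_mem C J (i :: w) t x ht hx
  rwa [List.map_cons, List.prod_cons, mul_assoc (pF C J i), mul_assoc (pF C J i)] at h

theorem spn_T_aux (g : UqP C J) (hg : g ∈ Pzero C J)
    (c : I → KK) (hc : ∀ k, g * pF C J k = c k • (pF C J k * g)) :
    ∀ v ∈ spn C J, g * v ∈ spn C J := by
  refine spn_stable C J _ fun w t x ht hx => ?_
  induction w with
  | nil =>
    have h := spn_mem C J [] (g * t) x (mul_mem hg ht) hx
    rw [List.map_nil, List.prod_nil, one_mul] at h ⊢
    rwa [← mul_assoc]
  | cons k w ih =>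
    rw [List.map_cons, List.prod_cons, mul_assoc (pF C J k), mul_assoc (pF C J k), ← mul_assoc g,
      hc, smul_mul_assoc, mul_assoc (pF C J k)]
    exact Submodule.smul_mem _ _ (spn_F C J k _ ih)

theorem spn_T (i : I) : ∀ v ∈ spn C J, pT C J i * v ∈ spn C J :=
  spn_T_aux C J _ (sT C J i).2 _ (fun k => p_t_f C J i k)

theorem spn_T' (i : I) : ∀ v ∈ spn C J, pTinv C J i * v ∈ spn C J :=
  spn_T_aux C J _ (sT' C J i).2 _ (fun k => p_tinv_f C J i k)

theorem swap_rel {R : Type} [Ring R] [Algebra KK R] (e t : R) (c : KK) (hc : c ≠ 0)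
    (h : t * e = c • (e * t)) : e * t = (c⁻¹ • t) * e := by
  rw [smul_mul_assoc, h, smul_smul, inv_mul_cancel₀ hc, one_smul]

theorem E_past_zero (j : J) (t : UqP C J) (ht : t ∈ Pzero C J) :
    ∃ t' ∈ Pzero C J, pE C J j * t = t' * pE C J j := by
  unfold Pzero at ht
  induction ht using Algebra.adjoin_induction with
  | mem t h =>
    rcases h with ⟨i, rfl⟩ | ⟨i, rfl⟩
    · exact ⟨_, Subalgebra.smul_mem _ (sT C J i).2 _,
        swap_rel _ _ _ (qpow_ne_zero _) (p_t_e C J i j)⟩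
    · exact ⟨_, Subalgebra.smul_mem _ (sT' C J i).2 _,
        swap_rel _ _ _ (inv_ne_zero (qpow_ne_zero _)) (p_tinv_e C J i j)⟩
  | algebraMap r => exact ⟨_, Subalgebra.algebraMap_mem _ r, (Algebra.commutes r _).symm⟩
  | add a b _ _ ha hb =>
    obtain ⟨a', ha', h1⟩ := ha
    obtain ⟨b', hb', h2⟩ := hb
    exact ⟨a' + b', add_mem ha' hb', by rw [mul_add, add_mul, h1, h2]⟩
  | mul a b _ _ ha hb =>
    obtain ⟨a', ha', h1⟩ := ha
    obtain ⟨b', hb', h2⟩ := hb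
    exact ⟨a' * b', mul_mem ha' hb', by rw [← mul_assoc, h1, mul_assoc, h2, mul_assoc]⟩

theorem spn_E (j : J) : ∀ v ∈ spn C J, pE C J j * v ∈ spn C J := by
  refine spn_stable C J _ fun w t x ht hx => ?_
  induction w with
  | nil =>
    obtain ⟨t', ht', h⟩ := E_past_zero C J j t ht
    have h1 := spn_mem C J [] t' (pE C J j * x) ht' (mul_mem (sE C J j).2 hx)
    rw [List.map_nil, List.prod_nil, one_mul] at h1 ⊢
    rwa [← mul_assoc, h, mul_assoc]
  | cons k w ih =>
    obtain ⟨c, hc⟩ := p_e_f C J j k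
    have hm := spn_mem C J w t x ht hx
    rw [List.map_cons, List.prod_cons, mul_assoc (pF C J k), mul_assoc (pF C J k),
      ← mul_assoc (pE C J j), hc, add_mul, smul_mul_assoc, sub_mul, mul_assoc (pF C J k)]
    exact Submodule.add_mem _ (spn_F C J k _ ih)
      (Submodule.smul_mem _ _ (Submodule.sub_mem _ (spn_T C J j _ hm) (spn_T' C J j _ hm)))

theorem spn_all (u : FAP I J) : ∀ v ∈ spn C J, pMk C J u * v ∈ spn C J := by
  induction u using FreeAlgebra.induction with
  | grade0 r =>
    intro v hv
    rw [AlgHom.commutes, ← Algebra.smul_def]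
    exact Submodule.smul_mem _ _ hv
  | grade1 x =>
    cases x with
    | e j => exact spn_E C J j
    | f j => exact spn_F C J j
    | t j => exact spn_T C J j
    | tinv j => exact spn_T' C J j
  | mul a b ha hb => intro v hv; rw [map_mul, mul_assoc]; exact ha _ (hb _ hv)
  | add a b ha hb => intro v hv; rw [map_add, add_mul]; exact Submodule.add_mem _ (ha _ hv) (hb _ hv)

theorem triMul_surj : Function.Surjective (triMul C J) := by
  intro u
  obtain ⟨u, rfl⟩ := RingQuot.mkAlgHom_surjective KK (QRelP C J) u
  have h1 : (1 : UqP C J) ∈ spn C J := by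
    have := spn_mem C J [] 1 1 (one_mem _) (one_mem _)
    simpa using this
  have h2 := spn_all C J u 1 h1
  rw [mul_one] at h2
  have h3 : spn C J ≤ LinearMap.range (triMul C J) := by
    refine Submodule.span_le.mpr ?_
    rintro _ ⟨w, t, x, ht, hx, rfl⟩
    have hw : (w.map (pF C J)).prod ∈ Pneg C J := by
      refine list_prod_mem ?_
      intro y hy
      obtain ⟨i, _, rfl⟩ := List.mem_map.mp hy
      exact (sF C J i).2
    exact ⟨((⟨_, hw⟩ : ↥(Pneg C J)) ⊗ₜ (⟨t, ht⟩ : ↥(Pzero C J))) ⊗ₜ (⟨x, hx⟩ : ↥(Ppos C J)), rfl⟩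
  exact h3 h2

end Para


/-- Triangular decomposition of the parabolic quantum group: the canonical homomorphism
`U_q(𝔭_J) → U_q(𝔤)` (sending generators to generators) is injective, and the
multiplication map induces an isomorphism
`U_q^-(𝔭_J) ⊗ U_q^0(𝔭_J) ⊗ U_q^+(𝔭_J) ≅ U_q(𝔭_J)`. -/
theorem parabolic_triangular_decomposition
    (I : Type) [DecidableEq I] (C : CartanData I) (J : Set I) :
    (∃ φ : UqP C J →ₐ[KK] Uq C,
        (∀ j : ↥J, φ (pE C J j) = uE C j) ∧
        (∀ i : I, φ (pF C J i) = uF C i) ∧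
        (∀ i : I, φ (pT C J i) = uT C i) ∧
        (∀ i : I, φ (pTinv C J i) = uTinv C i) ∧
        Function.Injective φ) ∧
    Function.Bijective (triMul C J) := by
  have hs := triMul_surj C J
  have hi := phi_triMul_inj C J
  refine ⟨⟨phi C J, phi_e C J, phi_f C J, phi_t C J, phi_tinv C J, ?_⟩, ?_, hs⟩
  · intro a b h
    obtain ⟨a, rfl⟩ := hs a
    obtain ⟨b, rfl⟩ := hs b
    exact congrArg _ (hi h)
  · intro a b h
    exact hi (congrArg (phi C J) h)

end
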